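/- arXiv:0904.0535 — 3 statements merged into one kernel-verified Lean document; each statement's English description precedes it below -/
import Mathlib

section
/- Let g be a pseudo-Riemannian metric whose degree of mobility equals 2 on a connected neighborhood U of a point p ∈ M^n, let v be a projective vector field for g, and let L be a (1,1)-tensor satisfying the compatibility equation with g such that det L ≠ 0 on U and {Id, L} is a basis of the space of (1,1)-tensors compatible with g. Then there exist constants α, γ, ν ∈ ℝ such that 𝓛_v L = α·L² + β·L + γ·Id, where β is the function β = −𝓛_v(log|det L|) + α·tr(L) + γ·tr(L^{-1}) + ν. -/
open Matrix Polynomial Filter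

noncomputable section

variable {ι : Type} [Fintype ι] [DecidableEq ι]

/-- Partial derivative of a real-valued function on `ι → ℝ` in the direction of the
`j`-th coordinate vector. -/
def pd (j : ι) (F : (ι → ℝ) → ℝ) (x : ι → ℝ) : ℝ :=
  fderiv ℝ F x (Pi.single j 1)

/-- Christoffel symbols `Γ^i_{jk}` of a metric given in local coordinates as a
matrix-valued function. -/
def christoffel (g : (ι → ℝ) → Matrix ι ι ℝ) (x : ι → ℝ) (i j k : ι) : ℝ :=
  (1 / 2) * ∑ m, (g x)⁻¹ i m *
    (pd j (fun y => g y m k) x + pd k (fun y => g y m j) x - pd m (fun y => g y j k) x)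

/-- A curve is a geodesic of `g` up to reparametrisation (an unparametrized geodesic):
`γ̈ + Γ(γ̇,γ̇) = α(t)·γ̇` for some function `α`. -/
def IsPregeodesic (g : (ι → ℝ) → Matrix ι ι ℝ) (γ : ℝ → ι → ℝ) : Prop :=
  ∃ α : ℝ → ℝ, ∀ t : ℝ, ∀ i : ι,
    deriv (fun s => deriv (fun τ => γ τ i) s) t
      + ∑ j, ∑ k, christoffel g (γ t) i j k *
          deriv (fun τ => γ τ j) t * deriv (fun τ => γ τ k) t
      = α t * deriv (fun τ => γ τ i) t

/-- `g` is a pseudo-Riemannian metric (in local coordinates) on the set `U`. -/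
structure IsMetricOn (g : (ι → ℝ) → Matrix ι ι ℝ) (U : Set (ι → ℝ)) : Prop where
  smooth : ∀ i j, ContDiffOn ℝ (⊤ : ℕ∞) (fun x => g x i j) U
  symm : ∀ x ∈ U, (g x)ᵀ = g x
  nondeg : ∀ x ∈ U, IsUnit (g x).det

/-- Two metrics are geodesically equivalent on `U`: they have the same geodesics
considered as unparametrized curves. -/
def GeodEquiv (g gb : (ι → ℝ) → Matrix ι ι ℝ) (U : Set (ι → ℝ)) : Prop :=
  ∀ γ : ℝ → ι → ℝ, ContDiff ℝ (⊤ : ℕ∞) γ → (∀ t, γ t ∈ U) →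
    (IsPregeodesic g γ ↔ IsPregeodesic gb γ)

/-- The (1,1)-tensor `L(g,ḡ)^i_j = (det ḡ / det g)^{1/(n+1)} ḡ^{ik} g_{kj}`. -/
def Lten (g gb : (ι → ℝ) → Matrix ι ι ℝ) (x : ι → ℝ) : Matrix ι ι ℝ :=
  (((gb x).det / (g x).det) ^ ((1 : ℝ) / (Fintype.card ι + 1))) • ((gb x)⁻¹ * g x)

/-- An admissible factorisation `χ = χ₁·χ₂` of the characteristic polynomial of `L`:
both factors are monic of degree ≥ 1, have smooth coefficients, and have no common
complex root at any point of `U`. -/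
structure AdmissibleFact (L : (ι → ℝ) → Matrix ι ι ℝ) (U : Set (ι → ℝ))
    (chi1 chi2 : (ι → ℝ) → Polynomial ℝ) : Prop where
  factor : ∀ x ∈ U, (L x).charpoly = chi1 x * chi2 x
  monic1 : ∀ x ∈ U, (chi1 x).Monic
  monic2 : ∀ x ∈ U, (chi2 x).Monic
  deg1 : ∀ x ∈ U, 1 ≤ (chi1 x).natDegree
  deg2 : ∀ x ∈ U, 1 ≤ (chi2 x).natDegree
  smooth1 : ∀ k, ContDiffOn ℝ (⊤ : ℕ∞) (fun x => (chi1 x).coeff k) U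
  smooth2 : ∀ k, ContDiffOn ℝ (⊤ : ℕ∞) (fun x => (chi2 x).coeff k) U
  coprime : ∀ x ∈ U, ¬ ∃ z : ℂ, aeval z (chi1 x) = 0 ∧ aeval z (chi2 x) = 0

/-- The distribution `D = ker χ(L)`. -/
def Dker (L : (ι → ℝ) → Matrix ι ι ℝ) (chi : (ι → ℝ) → Polynomial ℝ) (x : ι → ℝ) :
    Submodule ℝ (ι → ℝ) :=
  LinearMap.ker (Matrix.mulVecLin (aeval (L x) (chi x)))

/-- A distribution on `U` is integrable (involutive, which is equivalent by the
Frobenius theorem): the Lie bracket of any two smooth vector fields tangent to the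
distribution is again tangent to it. -/
def IsIntegrableDist (U : Set (ι → ℝ)) (D : (ι → ℝ) → Submodule ℝ (ι → ℝ)) : Prop :=
  ∀ u v : (ι → ℝ) → ι → ℝ, ContDiffOn ℝ (⊤ : ℕ∞) u U → ContDiffOn ℝ (⊤ : ℕ∞) v U →
    (∀ x ∈ U, u x ∈ D x) → (∀ x ∈ U, v x ∈ D x) →
    ∀ x ∈ U, (fderiv ℝ v x (u x) - fderiv ℝ u x (v x)) ∈ D x

/-- The Lie derivative of the Christoffel symbols of `g` along a vector field `v`:
`(𝓛_v Γ)^i_{jk} = v^m ∂_m Γ^i_{jk} − (∂_m v^i) Γ^m_{jk} + (∂_j v^m) Γ^i_{mk}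
  + (∂_k v^m) Γ^i_{jm} + ∂_j ∂_k v^i`. -/
def lieDerivGamma (g : (ι → ℝ) → Matrix ι ι ℝ) (v : (ι → ℝ) → ι → ℝ)
    (x : ι → ℝ) (i j k : ι) : ℝ :=
  (∑ m, v x m * pd m (fun y => christoffel g y i j k) x)
  - (∑ m, pd m (fun y => v y i) x * christoffel g x m j k)
  + (∑ m, pd j (fun y => v y m) x * christoffel g x i m k)
  + (∑ m, pd k (fun y => v y m) x * christoffel g x i j m)
  + pd j (fun y => pd k (fun z => v z i) y) x

/-- `v` is a projective vector field for `g` on `U`: its local flow takes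
unparametrized geodesics to geodesics; equivalently, the Lie derivative of the
Levi-Civita connection of `g` along `v` is of the projective form
`(𝓛_v Γ)^i_{jk} = δ^i_j φ_k + δ^i_k φ_j` for some 1-form `φ`. -/
def IsProjectiveVF (g : (ι → ℝ) → Matrix ι ι ℝ) (v : (ι → ℝ) → ι → ℝ)
    (U : Set (ι → ℝ)) : Prop :=
  ContDiffOn ℝ (⊤ : ℕ∞) v U ∧
  ∃ φ : (ι → ℝ) → ι → ℝ, ∀ x ∈ U, ∀ i j k : ι,
    lieDerivGamma g v x i j k
      = (if i = j then φ x k else 0) + (if i = k then φ x j else 0)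

/-- The Lie derivative of the metric `g` (a (0,2)-tensor) along `v`. -/
def lieDerivMetric (g : (ι → ℝ) → Matrix ι ι ℝ) (v : (ι → ℝ) → ι → ℝ)
    (x : ι → ℝ) : Matrix ι ι ℝ :=
  Matrix.of fun i j =>
    (∑ m, v x m * pd m (fun y => g y i j) x)
    + (∑ m, g x m j * pd i (fun y => v y m) x)
    + (∑ m, g x i m * pd j (fun y => v y m) x)

/-- The covariant derivative `∇_r L^i_j` of a (1,1)-tensor w.r.t. the Levi-Civita
connection of `g`. -/
def covDerivT (g L : (ι → ℝ) → Matrix ι ι ℝ) (x : ι → ℝ) (r i j : ι) : ℝ :=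
  pd r (fun y => L y i j) x
  + (∑ m, christoffel g x i r m * L x m j)
  - (∑ m, christoffel g x m r j * L x i m)

/-- `g` and `L` satisfy the compatibility equation (24):
`∇_r L^i_j = ½ (δ^i_r l_j + g^{is} l_s g_{rj})` with `l = d tr L`;
equivalently `g` and `ḡ = (det L)⁻¹ g L⁻¹` are geodesically equivalent. -/
def Compatible (g L : (ι → ℝ) → Matrix ι ι ℝ) (U : Set (ι → ℝ)) : Prop :=
  ∀ x ∈ U, ∀ r i j : ι,
    covDerivT g L x r i j
      = (1 / 2) * ((if i = r then 1 else 0) * pd j (fun y => (L y).trace) x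
          + (∑ s, (g x)⁻¹ i s * pd s (fun y => (L y).trace) x) * g x r j)

/-- The Lie derivative of a (1,1)-tensor `L` along a vector field `v`:
`(𝓛_v L)^i_j = v^m ∂_m L^i_j − (∂_m v^i) L^m_j + (∂_j v^m) L^i_m`. -/
def lieDerivEnd (v : (ι → ℝ) → ι → ℝ) (L : (ι → ℝ) → Matrix ι ι ℝ)
    (x : ι → ℝ) : Matrix ι ι ℝ :=
  Matrix.of fun i j =>
    (∑ m, v x m * pd m (fun y => L y i j) x)
    - (∑ m, pd m (fun y => v y i) x * L x m j)
    + (∑ m, pd j (fun y => v y m) x * L x i m)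

set_option linter.unusedSectionVars false
set_option linter.unusedDecidableInType false

/-- Entrywise smoothness of a matrix-valued function on `U`. -/
def SmoothEntries (M : (ι → ℝ) → Matrix ι ι ℝ) (U : Set (ι → ℝ)) : Prop :=
  ∀ i j, ContDiffOn ℝ (⊤ : ℕ∞) (fun x => M x i j) U

/-- Entrywise derivative of a matrix-valued function at `x` in the direction `w`. -/
def dirDeriv (w : ι → ℝ) (M : (ι → ℝ) → Matrix ι ι ℝ) (x : ι → ℝ) : Matrix ι ι ℝ :=
  Matrix.of fun i j => fderiv ℝ (fun y => M y i j) x w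

/-- The Jacobian matrix of a vector field. -/
def jacobian (v : (ι → ℝ) → ι → ℝ) (x : ι → ℝ) : Matrix ι ι ℝ :=
  Matrix.of fun i j => pd j (fun y => v y i) x

/-- The connection matrix `Γ_w = w^m Γ^i_{mj}`. -/
def connMatrix (g : (ι → ℝ) → Matrix ι ι ℝ) (w : ι → ℝ) (x : ι → ℝ) : Matrix ι ι ℝ :=
  Matrix.of fun i j => ∑ m, w m * christoffel g x i m j

/-- The differential of the trace, as a vector of partial derivatives. -/
def dTrace (L : (ι → ℝ) → Matrix ι ι ℝ) (x : ι → ℝ) : ι → ℝ :=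
  fun j => pd j (fun y => (L y).trace) x

section Calculus

variable {U : Set (ι → ℝ)} {M N : (ι → ℝ) → Matrix ι ι ℝ} {x : ι → ℝ}

theorem SmoothEntries.differentiableAt (hM : SmoothEntries M U) (hU : IsOpen U) (hx : x ∈ U)
    (i j : ι) : DifferentiableAt ℝ (fun y => M y i j) x :=
  ((hM i j).contDiffAt (hU.mem_nhds hx)).differentiableAt (by simp)

theorem SmoothEntries.add (hM : SmoothEntries M U) (hN : SmoothEntries N U) :
    SmoothEntries (fun y => M y + N y) U := fun i j => (hM i j).add (hN i j)

theorem SmoothEntries.sub (hM : SmoothEntries M U) (hN : SmoothEntries N U) :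
    SmoothEntries (fun y => M y - N y) U := fun i j => (hM i j).sub (hN i j)

theorem SmoothEntries.mul (hM : SmoothEntries M U) (hN : SmoothEntries N U) :
    SmoothEntries (fun y => M y * N y) U := fun i j => by
  simp only [Matrix.mul_apply]
  exact ContDiffOn.sum fun k _ => (hM i k).mul (hN k j)

theorem SmoothEntries.transpose (hM : SmoothEntries M U) :
    SmoothEntries (fun y => (M y)ᵀ) U := fun i j => hM j i

theorem SmoothEntries.smul_one {f : (ι → ℝ) → ℝ} (hf : ContDiffOn ℝ (⊤ : ℕ∞) f U) :
    SmoothEntries (fun y => f y • (1 : Matrix ι ι ℝ)) U := fun i j => by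
  simp only [Matrix.smul_apply, smul_eq_mul]
  exact hf.mul contDiffOn_const

theorem SmoothEntries.const_smul (hM : SmoothEntries M U) (c : ℝ) :
    SmoothEntries (fun y => c • M y) U := fun i j => by
  simp only [Matrix.smul_apply, smul_eq_mul]
  exact contDiffOn_const.mul (hM i j)

theorem SmoothEntries.trace (hM : SmoothEntries M U) :
    ContDiffOn ℝ (⊤ : ℕ∞) (fun y => (M y).trace) U := by
  simp only [Matrix.trace, Matrix.diag_apply]
  exact ContDiffOn.sum fun i _ => hM i i

theorem SmoothEntries.vecMulVec {a b : (ι → ℝ) → ι → ℝ} (ha : ContDiffOn ℝ (⊤ : ℕ∞) a U)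
    (hb : ContDiffOn ℝ (⊤ : ℕ∞) b U) :
    SmoothEntries (fun y => Matrix.vecMulVec (a y) (b y)) U := fun i j =>
  (contDiffOn_pi.1 ha i).mul (contDiffOn_pi.1 hb j)

theorem SmoothEntries.det (hM : SmoothEntries M U) :
    ContDiffOn ℝ (⊤ : ℕ∞) (fun y => (M y).det) U := by
  simp only [Matrix.det_apply']
  exact ContDiffOn.sum fun σ _ => contDiffOn_const.mul (contDiffOn_prod fun i _ => hM _ _)

theorem SmoothEntries.inv (hM : SmoothEntries M U) (hdet : ∀ y ∈ U, IsUnit (M y).det) :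
    SmoothEntries (fun y => (M y)⁻¹) U := fun i j => by
  simp only [Matrix.inv_def, Ring.inverse_eq_inv', Matrix.smul_apply, smul_eq_mul,
    Matrix.adjugate_apply]
  refine (hM.det.inv fun y hy => (hdet y hy).ne_zero).mul (SmoothEntries.det fun a b => ?_)
  by_cases h : a = j
  · subst h
    simpa using contDiffOn_const
  · simpa [Matrix.updateRow_ne h] using hM a b

theorem contDiffOn_fderiv_apply {F : (ι → ℝ) → ℝ} {v : (ι → ℝ) → ι → ℝ} (hU : IsOpen U)
    (hF : ContDiffOn ℝ (⊤ : ℕ∞) F U) (hv : ContDiffOn ℝ (⊤ : ℕ∞) v U) :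
    ContDiffOn ℝ (⊤ : ℕ∞) (fun y => fderiv ℝ F y (v y)) U :=
  (hF.fderiv_of_isOpen hU (by simp)).clm_apply hv

theorem SmoothEntries.dirDeriv {v : (ι → ℝ) → ι → ℝ} (hU : IsOpen U) (hM : SmoothEntries M U)
    (hv : ContDiffOn ℝ (⊤ : ℕ∞) v U) : SmoothEntries (fun y => dirDeriv (v y) M y) U :=
  fun i j => contDiffOn_fderiv_apply hU (hM i j) hv

theorem SmoothEntries.jacobian {v : (ι → ℝ) → ι → ℝ} (hU : IsOpen U)
    (hv : ContDiffOn ℝ (⊤ : ℕ∞) v U) : SmoothEntries (jacobian v) U :=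
  fun i _ => contDiffOn_fderiv_apply hU (contDiffOn_pi.1 hv i) contDiffOn_const

theorem SmoothEntries.dTrace (hU : IsOpen U) (hM : SmoothEntries M U) :
    ContDiffOn ℝ (⊤ : ℕ∞) (dTrace M) U :=
  contDiffOn_pi.2 fun _ => contDiffOn_fderiv_apply hU hM.trace contDiffOn_const

theorem SmoothEntries.connMatrix {g : (ι → ℝ) → Matrix ι ι ℝ} (hU : IsOpen U)
    (hg : SmoothEntries g U) (hdet : ∀ y ∈ U, IsUnit (g y).det) (w : ι → ℝ) :
    SmoothEntries (connMatrix g w) U := fun i j => by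
  have h (k a b : ι) : ContDiffOn ℝ (⊤ : ℕ∞) (fun y => pd k (fun z => g z a b) y) U :=
    contDiffOn_fderiv_apply hU (hg a b) contDiffOn_const
  refine ContDiffOn.sum fun m _ => contDiffOn_const.mul (contDiffOn_const.mul ?_)
  exact ContDiffOn.sum fun a _ => (hg.inv hdet i a).mul (((h _ _ _).add (h _ _ _)).sub (h _ _ _))

theorem dirDeriv_congr (hU : IsOpen U) (hx : x ∈ U) (h : ∀ y ∈ U, M y = N y) (w : ι → ℝ) :
    dirDeriv w M x = dirDeriv w N x := by
  ext i j
  have : (fun y => M y i j) =ᶠ[nhds x] fun y => N y i j := by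
    filter_upwards [hU.mem_nhds hx] with y hy
    rw [h y hy]
  simp only [dirDeriv, Matrix.of_apply, this.fderiv_eq]

theorem dirDeriv_add (hU : IsOpen U) (hx : x ∈ U) (hM : SmoothEntries M U)
    (hN : SmoothEntries N U) (w : ι → ℝ) :
    dirDeriv w (fun y => M y + N y) x = dirDeriv w M x + dirDeriv w N x := by
  ext i j
  simp only [dirDeriv, Matrix.of_apply, Matrix.add_apply]
  rw [fderiv_fun_add (hM.differentiableAt hU hx i j) (hN.differentiableAt hU hx i j)]
  rfl

theorem dirDeriv_sub (hU : IsOpen U) (hx : x ∈ U) (hM : SmoothEntries M U)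
    (hN : SmoothEntries N U) (w : ι → ℝ) :
    dirDeriv w (fun y => M y - N y) x = dirDeriv w M x - dirDeriv w N x := by
  ext i j
  simp only [dirDeriv, Matrix.of_apply, Matrix.sub_apply]
  rw [fderiv_fun_sub (hM.differentiableAt hU hx i j) (hN.differentiableAt hU hx i j)]
  rfl

theorem dirDeriv_const_smul (hU : IsOpen U) (hx : x ∈ U) (hM : SmoothEntries M U) (c : ℝ)
    (w : ι → ℝ) : dirDeriv w (fun y => c • M y) x = c • dirDeriv w M x := by
  ext i j
  simp only [dirDeriv, Matrix.of_apply, Matrix.smul_apply]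
  rw [fderiv_fun_const_smul (hM.differentiableAt hU hx i j)]
  rfl

theorem dirDeriv_transpose (w : ι → ℝ) :
    dirDeriv w (fun y => (M y)ᵀ) x = (dirDeriv w M x)ᵀ := rfl

theorem dirDeriv_mul (hU : IsOpen U) (hx : x ∈ U) (hM : SmoothEntries M U)
    (hN : SmoothEntries N U) (w : ι → ℝ) :
    dirDeriv w (fun y => M y * N y) x = dirDeriv w M x * N x + M x * dirDeriv w N x := by
  ext i j
  simp only [dirDeriv, Matrix.of_apply, Matrix.add_apply, Matrix.mul_apply]
  rw [fderiv_fun_sum fun k _ =>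
    (hM.differentiableAt hU hx i k).fun_mul (hN.differentiableAt hU hx k j),
    _root_.sum_apply, ← Finset.sum_add_distrib]
  refine Finset.sum_congr rfl fun k _ => ?_
  rw [fderiv_fun_mul (hM.differentiableAt hU hx i k) (hN.differentiableAt hU hx k j)]
  simp
  ring

theorem dirDeriv_one (w : ι → ℝ) : dirDeriv w (fun _ => (1 : Matrix ι ι ℝ)) x = 0 := by
  ext i j
  simp [dirDeriv]

theorem dirDeriv_smul_one {f : (ι → ℝ) → ℝ} (hf : DifferentiableAt ℝ f x) (w : ι → ℝ) :
    dirDeriv w (fun y => f y • (1 : Matrix ι ι ℝ)) x = fderiv ℝ f x w • 1 := by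
  ext i j
  simp only [dirDeriv, Matrix.of_apply, Matrix.smul_apply, smul_eq_mul]
  rw [fderiv_mul_const hf]
  simp [mul_comm]

theorem dirDeriv_vecMulVec_const {b : (ι → ℝ) → ι → ℝ} (hb : DifferentiableAt ℝ b x)
    (a w : ι → ℝ) :
    dirDeriv w (fun y => vecMulVec a (b y)) x = vecMulVec a (fderiv ℝ b x w) := by
  ext i j
  simp only [dirDeriv, Matrix.of_apply, vecMulVec_apply]
  rw [fderiv_const_mul (differentiableAt_pi.1 hb j), fderiv_apply hb j]
  simp

theorem trace_dirDeriv (hU : IsOpen U) (hx : x ∈ U) (hM : SmoothEntries M U) (w : ι → ℝ) :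
    (dirDeriv w M x).trace = fderiv ℝ (fun y => (M y).trace) x w := by
  simp only [Matrix.trace, Matrix.diag_apply, dirDeriv, Matrix.of_apply]
  rw [fderiv_fun_sum fun k _ => hM.differentiableAt hU hx k k, _root_.sum_apply]

theorem fderiv_apply_eq_sum_pd (F : (ι → ℝ) → ℝ) (x w : ι → ℝ) :
    fderiv ℝ F x w = ∑ m, w m * pd m F x := by
  conv_lhs => rw [pi_eq_sum_univ' w]
  simp [pd, map_sum]

theorem fderiv_fderiv_apply_comm {F : (ι → ℝ) → ℝ} {v : (ι → ℝ) → ι → ℝ} (hU : IsOpen U)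
    (hx : x ∈ U) (hF : ContDiffOn ℝ (⊤ : ℕ∞) F U) (hv : DifferentiableAt ℝ v x) (w : ι → ℝ) :
    fderiv ℝ (fun y => fderiv ℝ F y (v y)) x w =
      fderiv ℝ (fun y => fderiv ℝ F y w) x (v x) + fderiv ℝ F x (fderiv ℝ v x w) := by
  have hF' : ContDiffAt ℝ (⊤ : ℕ∞) F x := hF.contDiffAt (hU.mem_nhds hx)
  have hd : DifferentiableAt ℝ (fderiv ℝ F) x :=
    (((hF.fderiv_of_isOpen hU (m := (⊤ : ℕ∞)) (by simp))).contDiffAt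
      (hU.mem_nhds hx)).differentiableAt (by simp)
  have hs : IsSymmSndFDerivAt ℝ F x := hF'.isSymmSndFDerivAt (by
    simp only [minSmoothness_of_isRCLikeNormedField]
    exact WithTop.coe_le_coe.2 (le_top : (2 : ℕ∞) ≤ ⊤))
  rw [fderiv_clm_apply hd hv, fderiv_clm_apply hd (differentiableAt_const w)]
  simp [hs.eq w (v x), add_comm]

theorem fderiv_apply_eq_jacobian_mulVec {v : (ι → ℝ) → ι → ℝ} (hv : DifferentiableAt ℝ v x)
    (w : ι → ℝ) : fderiv ℝ v x w = jacobian v x *ᵥ w := by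
  ext i
  have h := fderiv_apply_eq_sum_pd (fun y => v y i) x w
  rw [fderiv_apply hv i] at h
  simpa [jacobian, mulVec, dotProduct, mul_comm] using h

theorem dirDeriv_dirDeriv_comm {v : (ι → ℝ) → ι → ℝ} (hU : IsOpen U) (hx : x ∈ U)
    (hM : SmoothEntries M U) (hv : DifferentiableAt ℝ v x) (w : ι → ℝ) :
    dirDeriv w (fun y => dirDeriv (v y) M y) x =
      dirDeriv (v x) (fun y => dirDeriv w M y) x + dirDeriv (jacobian v x *ᵥ w) M x := by
  ext i j
  rw [← fderiv_apply_eq_jacobian_mulVec hv]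
  exact fderiv_fderiv_apply_comm hU hx (hM i j) hv w

theorem fderiv_det (hU : IsOpen U) (hx : x ∈ U) (hM : SmoothEntries M U) (w : ι → ℝ) :
    fderiv ℝ (fun y => (M y).det) x w = ((M x).adjugate * dirDeriv w M x).trace := by
  let D : ContinuousMultilinearMap ℝ (fun _ : ι => ι → ℝ) ℝ :=
    ⟨(detRowAlternating (n := ι) (R := ℝ)).toMultilinearMap,
      (continuous_id (X := Matrix ι ι ℝ)).matrix_det⟩
  have hd (i : ι) : DifferentiableAt ℝ (fun y => M y i) x :=
    differentiableAt_pi.2 fun j => hM.differentiableAt hU hx i j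
  have hd' : DifferentiableAt ℝ (fun y i => M y i) x := differentiableAt_pi.2 hd
  have h := ((D.hasFDerivAt (M x)).comp x hd'.hasFDerivAt).fderiv
  have h2 := congrArg (fun T => T w) h
  refine Eq.trans h2 ?_
  have h3 (i : ι) : fderiv ℝ (fun y i => M y i) x w i = dirDeriv w M x i := by
    ext j
    have e1 := congrArg (fun T => T w) (fderiv_apply hd' i)
    have e2 := congrArg (fun T => T w) (fderiv_apply (hd i) j)
    simp only [ContinuousLinearMap.comp_apply, ContinuousLinearMap.proj_apply] at e1 e2
    rw [← e1, ← e2]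
    rfl
  have h4 : fderiv ℝ (fun y i => M y i) x w = dirDeriv w M x := funext h3
  have hlin (A B : ι → ι → ℝ) : D.linearDeriv A B = ∑ i, (Matrix.updateRow A i (B i)).det :=
    D.linearDeriv_apply A B
  refine (hlin (M x) (fderiv ℝ (fun y i => M y i) x w)).trans ?_
  rw [h4, Matrix.trace_mul_comm, Matrix.trace]
  refine Finset.sum_congr rfl fun i _ => ?_
  rw [← cramer_transpose_apply, cramer_eq_adjugate_mulVec, ← Matrix.adjugate_transpose,
    Matrix.diag_apply, Matrix.mul_apply]
  simp [mulVec, dotProduct, mul_comm]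

theorem fderiv_log_abs_det (hU : IsOpen U) (hx : x ∈ U) (hM : SmoothEntries M U)
    (hdet : IsUnit (M x).det) (w : ι → ℝ) :
    fderiv ℝ (fun y => Real.log |(M y).det|) x w = ((M x)⁻¹ * dirDeriv w M x).trace := by
  have hd : DifferentiableAt ℝ (fun y => (M y).det) x :=
    (hM.det.contDiffAt (hU.mem_nhds hx)).differentiableAt (by simp)
  simp only [Real.log_abs]
  rw [fderiv.log hd hdet.ne_zero, _root_.smul_apply, fderiv_det hU hx hM,
    Matrix.inv_def, Ring.inverse_eq_inv', Matrix.smul_mul, Matrix.trace_smul]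

end Calculus

/-- The operator `X ↦ X + X^*`, where `X^*` is the adjoint with respect to the bilinear form with
matrix `g`. -/
def addAdjoint (g X : Matrix ι ι ℝ) : Matrix ι ι ℝ := X + g⁻¹ * Xᵀ * g

section Geometry

variable {U : Set (ι → ℝ)} {g L : (ι → ℝ) → Matrix ι ι ℝ} {v : (ι → ℝ) → ι → ℝ} {x : ι → ℝ}

theorem trace_addAdjoint_vecMulVec {h : Matrix ι ι ℝ} (hh : IsUnit h.det) (w ω : ι → ℝ) :
    (addAdjoint h (vecMulVec w ω)).trace = 2 * (w ⬝ᵥ ω) := by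
  rw [addAdjoint, trace_add, trace_mul_cycle, Matrix.mul_nonsing_inv _ hh, Matrix.one_mul,
    Matrix.trace_transpose, Matrix.trace_vecMulVec]
  ring

theorem connMatrix_single (g : (ι → ℝ) → Matrix ι ι ℝ) (x : ι → ℝ) (i j k : ι) :
    connMatrix g (Pi.single k 1) x i j = christoffel g x i k j := by
  simp [connMatrix, Pi.single_apply]

theorem sum_metric_mul_christoffel (hg : IsUnit (g x).det) (i j k : ι) :
    ∑ a, g x i a * christoffel g x a k j = (1 / 2) *
      (pd k (fun y => g y i j) x + pd j (fun y => g y i k) x - pd i (fun y => g y k j) x) := by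
  let c : ι → ℝ := fun m =>
    pd k (fun y => g y m j) x + pd j (fun y => g y m k) x - pd m (fun y => g y k j) x
  have h : g x *ᵥ ((g x)⁻¹ *ᵥ c) = c := by
    rw [mulVec_mulVec, Matrix.mul_nonsing_inv _ hg, one_mulVec]
  have hi := congrFun h i
  simp only [mulVec, dotProduct] at hi
  change _ = (1 / 2) * c i
  rw [← hi, Finset.mul_sum]
  refine Finset.sum_congr rfl fun a _ => ?_
  simp only [christoffel, c]
  ring

theorem metric_mul_connMatrix_apply (hg : IsUnit (g x).det) (w : ι → ℝ) (i j : ι) :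
    (g x * connMatrix g w x) i j = ∑ m, w m * ((1 / 2) *
      (pd m (fun y => g y i j) x + pd j (fun y => g y i m) x - pd i (fun y => g y m j) x)) := by
  simp only [Matrix.mul_apply, connMatrix, Matrix.of_apply, Finset.mul_sum]
  rw [Finset.sum_comm]
  refine Finset.sum_congr rfl fun m _ => ?_
  rw [← sum_metric_mul_christoffel hg, Finset.mul_sum]
  exact Finset.sum_congr rfl fun a _ => by ring

theorem pd_metric_comm (hU : IsOpen U) (hg : IsMetricOn g U) (hx : x ∈ U) (i j k : ι) :
    pd k (fun y => g y i j) x = pd k (fun y => g y j i) x := by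
  have : (fun y => g y i j) =ᶠ[nhds x] fun y => g y j i := by
    filter_upwards [hU.mem_nhds hx] with y hy
    exact congrFun₂ (hg.symm y hy) j i
  rw [pd, this.fderiv_eq, pd]

/-- The Levi-Civita connection is metric. -/
theorem dirDeriv_metric (hU : IsOpen U) (hg : IsMetricOn g U) (hx : x ∈ U) (w : ι → ℝ) :
    dirDeriv w g x = (connMatrix g w x)ᵀ * g x + g x * connMatrix g w x := by
  have ht : (connMatrix g w x)ᵀ * g x = (g x * connMatrix g w x)ᵀ := by
    rw [transpose_mul, hg.symm x hx]
  ext i j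
  rw [ht, Matrix.add_apply, Matrix.transpose_apply,
    metric_mul_connMatrix_apply (hg.nondeg x hx), metric_mul_connMatrix_apply (hg.nondeg x hx),
    ← Finset.sum_add_distrib]
  refine (fderiv_apply_eq_sum_pd _ x w).trans (Finset.sum_congr rfl fun m _ => ?_)
  rw [pd_metric_comm hU hg hx j i m, pd_metric_comm hU hg hx j m i,
    pd_metric_comm hU hg hx i m j]
  ring

theorem dirDeriv_metric_inv (hU : IsOpen U) (hg : IsMetricOn g U) (hx : x ∈ U) (w : ι → ℝ) :
    dirDeriv w (fun y => (g y)⁻¹) x = -((g x)⁻¹ * dirDeriv w g x * (g x)⁻¹) := by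
  have h := dirDeriv_mul hU hx (SmoothEntries.inv hg.smooth hg.nondeg) hg.smooth w
  rw [dirDeriv_congr hU hx (fun y hy => Matrix.nonsing_inv_mul _ (hg.nondeg y hy)),
    dirDeriv_one] at h
  rw [← Matrix.neg_mul, ← eq_neg_of_add_eq_zero_left h.symm, Matrix.mul_assoc,
    Matrix.mul_nonsing_inv _ (hg.nondeg x hx), Matrix.mul_one]

theorem dirDeriv_eq_sum (M : (ι → ℝ) → Matrix ι ι ℝ) (w x : ι → ℝ) :
    dirDeriv w M x = ∑ m, w m • dirDeriv (Pi.single m 1) M x := by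
  ext i j
  simpa [Matrix.sum_apply, dirDeriv, pd] using fderiv_apply_eq_sum_pd (fun y => M y i j) x w

theorem connMatrix_eq_sum (g : (ι → ℝ) → Matrix ι ι ℝ) (w x : ι → ℝ) :
    connMatrix g w x = ∑ m, w m • connMatrix g (Pi.single m 1) x := by
  ext i j
  simp [Matrix.sum_apply, connMatrix, Pi.single_apply]

theorem covDerivT_eq (g L : (ι → ℝ) → Matrix ι ι ℝ) (x : ι → ℝ) (r i j : ι) :
    covDerivT g L x r i j = (dirDeriv (Pi.single r 1) L x + connMatrix g (Pi.single r 1) x * L x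
      - L x * connMatrix g (Pi.single r 1) x) i j := by
  simp [covDerivT, Matrix.mul_apply, connMatrix_single, dirDeriv, pd, mul_comm]

theorem addAdjoint_vecMulVec_single (h : Matrix ι ι ℝ) (ω : ι → ℝ) (r i j : ι) :
    addAdjoint h (vecMulVec (Pi.single r 1) ω) i j =
      (if i = r then 1 else 0) * ω j + (∑ s, h⁻¹ i s * ω s) * h r j := by
  simp [addAdjoint, Matrix.mul_apply, vecMulVec_apply, Pi.single_apply, transpose_vecMulVec,
    Finset.sum_mul]

theorem addAdjoint_vecMulVec_eq_sum (h : Matrix ι ι ℝ) (w ω : ι → ℝ) :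
    addAdjoint h (vecMulVec w ω) =
      ∑ m, w m • addAdjoint h (vecMulVec (Pi.single m 1) ω) := by
  have hw : vecMulVec w ω = ∑ m, w m • vecMulVec (Pi.single m 1) ω := by
    ext i j
    simp [Matrix.sum_apply, vecMulVec_apply, Pi.single_apply]
  conv_lhs => rw [hw]
  simp [addAdjoint, transpose_sum, Finset.mul_sum, Finset.sum_mul, Finset.sum_add_distrib]

/-- Index-free form of the compatibility equation. -/
theorem Compatible.dirDeriv_eq (h : Compatible g L U) (hx : x ∈ U) (w : ι → ℝ) :
    dirDeriv w L x = (1 / 2 : ℝ) • addAdjoint (g x) (vecMulVec w (dTrace L x))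
      - connMatrix g w x * L x + L x * connMatrix g w x := by
  have hr (r : ι) : dirDeriv (Pi.single r 1) L x =
      (1 / 2 : ℝ) • addAdjoint (g x) (vecMulVec (Pi.single r 1) (dTrace L x))
        - connMatrix g (Pi.single r 1) x * L x + L x * connMatrix g (Pi.single r 1) x := by
    have : dirDeriv (Pi.single r 1) L x + connMatrix g (Pi.single r 1) x * L x
        - L x * connMatrix g (Pi.single r 1) x =
        (1 / 2 : ℝ) • addAdjoint (g x) (vecMulVec (Pi.single r 1) (dTrace L x)) := by
      ext i j
      rw [← covDerivT_eq, h x hx r i j, Matrix.smul_apply, addAdjoint_vecMulVec_single]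
      rfl
    rw [← this]
    abel
  rw [dirDeriv_eq_sum, addAdjoint_vecMulVec_eq_sum, connMatrix_eq_sum]
  simp only [hr, smul_add, smul_sub, Finset.sum_add_distrib, Finset.sum_sub_distrib,
    Finset.smul_sum, Finset.sum_mul, Finset.mul_sum, Matrix.smul_mul, Matrix.mul_smul]
  congr 2
  exact Finset.sum_congr rfl fun m _ => smul_comm _ _ _

/-- A tensor whose covariant derivative has the form `½ (u ⊗ ω + (u ⊗ ω)^*)` is compatible:
`ω` is automatically the differential of the trace. -/
theorem compatible_of_dirDeriv_eq (hU : IsOpen U) (hg : IsMetricOn g U)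
    (hL : SmoothEntries L U)
    (h : ∀ x ∈ U, ∃ ω : ι → ℝ, ∀ r, dirDeriv (Pi.single r 1) L x
      + connMatrix g (Pi.single r 1) x * L x - L x * connMatrix g (Pi.single r 1) x =
        (1 / 2 : ℝ) • addAdjoint (g x) (vecMulVec (Pi.single r 1) ω)) :
    Compatible g L U := by
  intro x hx r i j
  obtain ⟨ω, hω⟩ := h x hx
  have hl (s : ι) : pd s (fun y => (L y).trace) x = ω s := by
    have := congrArg Matrix.trace (hω s)
    rw [trace_sub, trace_add, trace_mul_comm (connMatrix g _ x), add_sub_cancel_right,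
      trace_dirDeriv hU hx hL, trace_smul, trace_addAdjoint_vecMulVec (hg.nondeg x hx)] at this
    simpa [pd] using this
  rw [covDerivT_eq, hω r, Matrix.smul_apply, addAdjoint_vecMulVec_single]
  simp only [hl, smul_eq_mul]

theorem lieDerivEnd_eq (v : (ι → ℝ) → ι → ℝ) (L : (ι → ℝ) → Matrix ι ι ℝ) (x : ι → ℝ) :
    lieDerivEnd v L x = dirDeriv (v x) L x - jacobian v x * L x + L x * jacobian v x := by
  ext i j
  simp [lieDerivEnd, Matrix.mul_apply, jacobian, dirDeriv, fderiv_apply_eq_sum_pd, mul_comm]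

theorem lieDerivMetric_eq (g : (ι → ℝ) → Matrix ι ι ℝ) (v : (ι → ℝ) → ι → ℝ) (x : ι → ℝ) :
    lieDerivMetric g v x =
      dirDeriv (v x) g x + (jacobian v x)ᵀ * g x + g x * jacobian v x := by
  ext i j
  simp [lieDerivMetric, Matrix.mul_apply, jacobian, dirDeriv, fderiv_apply_eq_sum_pd, mul_comm]

theorem lieDerivGamma_eq (g : (ι → ℝ) → Matrix ι ι ℝ) (v : (ι → ℝ) → ι → ℝ) (x : ι → ℝ)
    (i j k : ι) : lieDerivGamma g v x i k j =
      (dirDeriv (v x) (connMatrix g (Pi.single k 1)) x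
        - jacobian v x * connMatrix g (Pi.single k 1) x
        + connMatrix g (jacobian v x *ᵥ Pi.single k 1) x
        + connMatrix g (Pi.single k 1) x * jacobian v x
        + dirDeriv (Pi.single k 1) (jacobian v) x) i j := by
  simp only [Matrix.add_apply, Matrix.sub_apply, Matrix.mul_apply, connMatrix_single, dirDeriv,
    Matrix.of_apply, jacobian, fderiv_apply_eq_sum_pd _ x (v x), lieDerivGamma]
  simp [connMatrix, pd, mul_comm]

/-- The matrix form of the defining equation of a projective vector field. -/
theorem IsProjectiveVF.exists_dirDeriv_connMatrix (hv : IsProjectiveVF g v U) :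
    ∃ φ : (ι → ℝ) → ι → ℝ, ∀ x ∈ U, ∀ k,
      dirDeriv (v x) (connMatrix g (Pi.single k 1)) x =
        vecMulVec (Pi.single k 1) (φ x) + φ x k • (1 : Matrix ι ι ℝ)
        + jacobian v x * connMatrix g (Pi.single k 1) x
        - connMatrix g (jacobian v x *ᵥ Pi.single k 1) x
        - connMatrix g (Pi.single k 1) x * jacobian v x
        - dirDeriv (Pi.single k 1) (jacobian v) x := by
  obtain ⟨-, φ, hφ⟩ := hv
  refine ⟨φ, fun x hx k => ?_⟩
  have : dirDeriv (v x) (connMatrix g (Pi.single k 1)) x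
        - jacobian v x * connMatrix g (Pi.single k 1) x
        + connMatrix g (jacobian v x *ᵥ Pi.single k 1) x
        + connMatrix g (Pi.single k 1) x * jacobian v x
        + dirDeriv (Pi.single k 1) (jacobian v) x =
      vecMulVec (Pi.single k 1) (φ x) + φ x k • (1 : Matrix ι ι ℝ) := by
    ext i j
    rw [← lieDerivGamma_eq, hφ x hx]
    simp [vecMulVec_apply, Pi.single_apply, Matrix.one_apply]
  rw [← this]
  abel

end Geometry

/-- The trace-adjusted Lie derivative `g⁻¹ 𝓛_v g - tr(g⁻¹ 𝓛_v g)/(n+1)` of the metric. -/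
def projLieMetric (g : (ι → ℝ) → Matrix ι ι ℝ) (v : (ι → ℝ) → ι → ℝ) (x : ι → ℝ) :
    Matrix ι ι ℝ :=
  (g x)⁻¹ * lieDerivMetric g v x
    - (((g x)⁻¹ * lieDerivMetric g v x).trace / (Fintype.card ι + 1)) • (1 : Matrix ι ι ℝ)

/-- Lie derivative along `v` of the weighted tensor corresponding to `L`. -/
def projLieEnd (g : (ι → ℝ) → Matrix ι ι ℝ) (v : (ι → ℝ) → ι → ℝ)
    (L : (ι → ℝ) → Matrix ι ι ℝ) (x : ι → ℝ) : Matrix ι ι ℝ :=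
  lieDerivEnd v L x - L x * projLieMetric g v x

section Projective

variable {U : Set (ι → ℝ)} {g L : (ι → ℝ) → Matrix ι ι ℝ} {v : (ι → ℝ) → ι → ℝ} {x : ι → ℝ}

theorem SmoothEntries.lieDerivMetric (hU : IsOpen U) (hg : SmoothEntries g U)
    (hv : ContDiffOn ℝ (⊤ : ℕ∞) v U) : SmoothEntries (lieDerivMetric g v) U := by
  have hJ := SmoothEntries.jacobian hU hv
  rw [funext (lieDerivMetric_eq g v)]
  exact ((SmoothEntries.dirDeriv hU hg hv).add (hJ.transpose.mul hg)).add (hg.mul hJ)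

theorem SmoothEntries.lieDerivEnd (hU : IsOpen U) (hL : SmoothEntries L U)
    (hv : ContDiffOn ℝ (⊤ : ℕ∞) v U) : SmoothEntries (lieDerivEnd v L) U := by
  have hJ := SmoothEntries.jacobian hU hv
  rw [funext (lieDerivEnd_eq v L)]
  exact ((SmoothEntries.dirDeriv hU hL hv).sub (hJ.mul hL)).add (hL.mul hJ)

theorem IsMetricOn.smoothEntries_inv_mul_lieDerivMetric (hU : IsOpen U) (hg : IsMetricOn g U)
    (hv : ContDiffOn ℝ (⊤ : ℕ∞) v U) :
    SmoothEntries (fun y => (g y)⁻¹ * lieDerivMetric g v y) U :=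
  (SmoothEntries.inv hg.smooth hg.nondeg).mul (SmoothEntries.lieDerivMetric hU hg.smooth hv)

theorem IsMetricOn.smoothEntries_projLieMetric (hU : IsOpen U) (hg : IsMetricOn g U)
    (hv : ContDiffOn ℝ (⊤ : ℕ∞) v U) : SmoothEntries (projLieMetric g v) U := by
  have h := hg.smoothEntries_inv_mul_lieDerivMetric hU hv
  exact h.sub (SmoothEntries.smul_one (h.trace.div_const _))

theorem IsMetricOn.smoothEntries_projLieEnd (hU : IsOpen U) (hg : IsMetricOn g U)
    (hL : SmoothEntries L U) (hv : ContDiffOn ℝ (⊤ : ℕ∞) v U) :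
    SmoothEntries (projLieEnd g v L) U :=
  (SmoothEntries.lieDerivEnd hU hL hv).sub (hL.mul (hg.smoothEntries_projLieMetric hU hv))

theorem lieDerivMetric_transpose (hU : IsOpen U) (hg : IsMetricOn g U) (hx : x ∈ U) :
    (lieDerivMetric g v x)ᵀ = lieDerivMetric g v x := by
  have h : (dirDeriv (v x) g x)ᵀ = dirDeriv (v x) g x := by
    rw [← dirDeriv_transpose]
    exact dirDeriv_congr hU hx hg.symm _
  rw [lieDerivMetric_eq]
  simp only [transpose_add, transpose_mul, transpose_transpose, h, hg.symm x hx]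
  abel

theorem metric_mul_projLieMetric (hg : IsMetricOn g U) (hx : x ∈ U) :
    g x * projLieMetric g v x = lieDerivMetric g v x
      - (((g x)⁻¹ * lieDerivMetric g v x).trace / (Fintype.card ι + 1)) • g x := by
  rw [projLieMetric, Matrix.mul_sub, ← Matrix.mul_assoc,
    Matrix.mul_nonsing_inv _ (hg.nondeg x hx), Matrix.one_mul, Matrix.mul_smul, Matrix.mul_one]

theorem metric_mul_projLieMetric_transpose (hU : IsOpen U) (hg : IsMetricOn g U) (hx : x ∈ U) :
    (g x * projLieMetric g v x)ᵀ = g x * projLieMetric g v x := by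
  rw [metric_mul_projLieMetric hg hx, transpose_sub, transpose_smul,
    lieDerivMetric_transpose hU hg hx, hg.symm x hx]

theorem metric_mul_projLieEnd_transpose (hU : IsOpen U) (hg : IsMetricOn g U)
    (hL : SmoothEntries L U) (hLsa : ∀ x ∈ U, (g x * L x)ᵀ = g x * L x) (hx : x ∈ U) :
    (g x * projLieEnd g v L x)ᵀ = g x * projLieEnd g v L x := by
  set c := ((g x)⁻¹ * lieDerivMetric g v x).trace / (Fintype.card ι + 1 : ℝ)
  set W := dirDeriv (v x) (fun y => g y * L y) x with hW
  have hWs : Wᵀ = W := by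
    rw [hW, ← dirDeriv_transpose]
    exact dirDeriv_congr hU hx hLsa _
  have hWe : g x * dirDeriv (v x) L x = W - dirDeriv (v x) g x * L x := by
    rw [hW, dirDeriv_mul hU hx hg.smooth hL]
    abel
  have hS := lieDerivMetric_transpose (v := v) hU hg hx
  have hSe := lieDerivMetric_eq g v x
  have hA := metric_mul_projLieMetric (v := v) hg hx
  have hgL : (L x)ᵀ * g x = g x * L x := by
    rw [← hLsa x hx, transpose_mul, hg.symm x hx]
  have hLA : g x * (L x * projLieMetric g v x) =
      (L x)ᵀ * lieDerivMetric g v x - c • (g x * L x) := by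
    rw [← Matrix.mul_assoc, ← hgL, Matrix.mul_assoc, hA, Matrix.mul_sub, Matrix.mul_smul]
  have key : g x * projLieEnd g v L x = W + (jacobian v x)ᵀ * (g x * L x)
      + (g x * L x) * jacobian v x
      - (lieDerivMetric g v x * L x + (L x)ᵀ * lieDerivMetric g v x) + c • (g x * L x) := by
    rw [projLieEnd, Matrix.mul_sub, hLA, lieDerivEnd_eq, hSe]
    simp only [Matrix.mul_add, Matrix.mul_sub, hWe, Matrix.add_mul, Matrix.mul_assoc]
    abel
  rw [key]
  simp only [transpose_add, transpose_sub, transpose_smul, hWs, hLsa x hx, hS, transpose_transpose,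
    transpose_mul (jacobian v x)ᵀ, transpose_mul (g x * L x), transpose_mul (L x)ᵀ,
    transpose_mul (lieDerivMetric g v x)]
  abel

theorem dirDeriv_lieDerivMetric (hU : IsOpen U) (hg : IsMetricOn g U)
    (hv : ContDiffOn ℝ (⊤ : ℕ∞) v U) {Q : Matrix ι ι ℝ} {k : ι} (hx : x ∈ U)
    (hQ : dirDeriv (v x) (connMatrix g (Pi.single k 1)) x = Q
        + jacobian v x * connMatrix g (Pi.single k 1) x
        - connMatrix g (jacobian v x *ᵥ Pi.single k 1) x
        - connMatrix g (Pi.single k 1) x * jacobian v x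
        - dirDeriv (Pi.single k 1) (jacobian v) x) :
    dirDeriv (Pi.single k 1) (lieDerivMetric g v) x =
      (connMatrix g (Pi.single k 1) x)ᵀ * lieDerivMetric g v x
        + lieDerivMetric g v x * connMatrix g (Pi.single k 1) x + Qᵀ * g x + g x * Q := by
  have hJ := SmoothEntries.jacobian hU hv
  have hgs : SmoothEntries g U := hg.smooth
  have hΓ := SmoothEntries.connMatrix hU hgs hg.nondeg (Pi.single k 1)
  have hvx : DifferentiableAt ℝ v x := (hv.contDiffAt (hU.mem_nhds hx)).differentiableAt (by simp)
  rw [lieDerivMetric_eq g v x, funext (lieDerivMetric_eq g v),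
    dirDeriv_add hU hx ((SmoothEntries.dirDeriv hU hgs hv).add (hJ.transpose.mul hgs))
      (hgs.mul hJ),
    dirDeriv_add hU hx (SmoothEntries.dirDeriv hU hgs hv) (hJ.transpose.mul hgs),
    dirDeriv_mul hU hx hJ.transpose hgs, dirDeriv_mul hU hx hgs hJ,
    dirDeriv_dirDeriv_comm hU hx hgs hvx,
    dirDeriv_congr hU hx (fun y hy => dirDeriv_metric hU hg hy _) (v x),
    dirDeriv_add hU hx (hΓ.transpose.mul hgs) (hgs.mul hΓ), dirDeriv_mul hU hx hΓ.transpose hgs,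
    dirDeriv_mul hU hx hgs hΓ, dirDeriv_transpose, dirDeriv_transpose,
    dirDeriv_metric hU hg hx (Pi.single k 1), dirDeriv_metric hU hg hx (jacobian v x *ᵥ _), hQ]
  simp only [transpose_add, transpose_sub, transpose_mul]
  noncomm_ring

theorem dirDeriv_inv_mul_lieDerivMetric (hU : IsOpen U) (hg : IsMetricOn g U)
    (hv : ContDiffOn ℝ (⊤ : ℕ∞) v U) {φ : ι → ℝ} {k : ι} (hx : x ∈ U)
    (hQ : dirDeriv (v x) (connMatrix g (Pi.single k 1)) x =
        vecMulVec (Pi.single k 1) φ + φ k • (1 : Matrix ι ι ℝ)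
        + jacobian v x * connMatrix g (Pi.single k 1) x
        - connMatrix g (jacobian v x *ᵥ Pi.single k 1) x
        - connMatrix g (Pi.single k 1) x * jacobian v x
        - dirDeriv (Pi.single k 1) (jacobian v) x) :
    dirDeriv (Pi.single k 1) (fun y => (g y)⁻¹ * lieDerivMetric g v y) x =
      addAdjoint (g x) (vecMulVec (Pi.single k 1) φ) + (2 * φ k) • (1 : Matrix ι ι ℝ)
        - connMatrix g (Pi.single k 1) x * ((g x)⁻¹ * lieDerivMetric g v x)
        + (g x)⁻¹ * lieDerivMetric g v x * connMatrix g (Pi.single k 1) x := by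
  have h1 := Matrix.nonsing_inv_mul _ (hg.nondeg x hx)
  have h1' (X : Matrix ι ι ℝ) : (g x)⁻¹ * (g x * X) = X := by
    rw [← Matrix.mul_assoc, h1, Matrix.one_mul]
  have h2' (X : Matrix ι ι ℝ) : g x * ((g x)⁻¹ * X) = X := by
    rw [← Matrix.mul_assoc, Matrix.mul_nonsing_inv _ (hg.nondeg x hx), Matrix.one_mul]
  rw [dirDeriv_mul hU hx (SmoothEntries.inv hg.smooth hg.nondeg)
      (SmoothEntries.lieDerivMetric hU hg.smooth hv), dirDeriv_metric_inv hU hg hx,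
    dirDeriv_metric hU hg hx, dirDeriv_lieDerivMetric hU hg hv hx hQ, addAdjoint]
  simp only [transpose_add, transpose_smul, transpose_one, Matrix.mul_add, Matrix.add_mul,
    Matrix.mul_assoc, h1', h2', Matrix.smul_mul, Matrix.mul_smul, Matrix.one_mul, Matrix.mul_one,
    h1, Matrix.neg_mul]
  module

theorem dirDeriv_projLieMetric (hU : IsOpen U) (hg : IsMetricOn g U)
    (hv : ContDiffOn ℝ (⊤ : ℕ∞) v U) {φ : ι → ℝ} {k : ι} (hx : x ∈ U)
    (hQ : dirDeriv (v x) (connMatrix g (Pi.single k 1)) x =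
        vecMulVec (Pi.single k 1) φ + φ k • (1 : Matrix ι ι ℝ)
        + jacobian v x * connMatrix g (Pi.single k 1) x
        - connMatrix g (jacobian v x *ᵥ Pi.single k 1) x
        - connMatrix g (Pi.single k 1) x * jacobian v x
        - dirDeriv (Pi.single k 1) (jacobian v) x) :
    dirDeriv (Pi.single k 1) (projLieMetric g v) x =
      addAdjoint (g x) (vecMulVec (Pi.single k 1) φ)
        - connMatrix g (Pi.single k 1) x * projLieMetric g v x
        + projLieMetric g v x * connMatrix g (Pi.single k 1) x := by
  have hh := hg.smoothEntries_inv_mul_lieDerivMetric hU hv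
  have hD := dirDeriv_inv_mul_lieDerivMetric hU hg hv hx hQ
  have hdiff : DifferentiableAt ℝ (fun y => ((g y)⁻¹ * lieDerivMetric g v y).trace) x :=
    (hh.trace.contDiffAt (hU.mem_nhds hx)).differentiableAt (by simp)
  have htr : fderiv ℝ (fun y => ((g y)⁻¹ * lieDerivMetric g v y).trace /
      (Fintype.card ι + 1 : ℝ)) x (Pi.single k 1) = 2 * φ k := by
    simp only [div_eq_mul_inv]
    rw [fderiv_mul_const hdiff, _root_.smul_apply, ← trace_dirDeriv hU hx hh, hD,
      trace_add, trace_sub, trace_mul_comm (connMatrix g _ x), sub_add_cancel, trace_add,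
      trace_addAdjoint_vecMulVec (hg.nondeg x hx), trace_smul, trace_one]
    simp only [single_dotProduct, smul_eq_mul]
    field_simp
    ring
  change dirDeriv (Pi.single k 1) (fun y => (g y)⁻¹ * lieDerivMetric g v y
    - (((g y)⁻¹ * lieDerivMetric g v y).trace / (Fintype.card ι + 1)) • (1 : Matrix ι ι ℝ)) x = _
  rw [dirDeriv_sub hU hx hh (SmoothEntries.smul_one (hh.trace.div_const _)), hD,
    dirDeriv_smul_one (by simpa only [div_eq_mul_inv] using hdiff.mul_const _), htr, projLieMetric]
  simp only [Matrix.mul_sub, Matrix.sub_mul, Matrix.smul_mul, Matrix.mul_smul, Matrix.one_mul,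
    Matrix.mul_one]
  abel

/-- For a projective vector field `v`, the tensor `g⁻¹ 𝓛_v g - tr(g⁻¹ 𝓛_v g)/(n+1)` is compatible
with `g`. -/
theorem IsProjectiveVF.compatible_projLieMetric (hU : IsOpen U) (hg : IsMetricOn g U)
    (hv : IsProjectiveVF g v U) : Compatible g (projLieMetric g v) U := by
  obtain ⟨φ, hφ⟩ := hv.exists_dirDeriv_connMatrix
  refine compatible_of_dirDeriv_eq hU hg (hg.smoothEntries_projLieMetric hU hv.1) fun x hx =>
    ⟨(2 : ℝ) • φ x, fun r => ?_⟩
  rw [dirDeriv_projLieMetric hU hg hv.1 hx (hφ x hx r), vecMulVec_smul, addAdjoint, addAdjoint]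
  simp only [transpose_smul, Matrix.smul_mul, Matrix.mul_smul]
  module

theorem dirDeriv_compatible_rhs (hU : IsOpen U) (hg : IsMetricOn g U) {l : (ι → ℝ) → ι → ℝ}
    (hl : ContDiffOn ℝ (⊤ : ℕ∞) l U) (hx : x ∈ U) (w u : ι → ℝ) :
    dirDeriv w (fun y => addAdjoint (g y) (vecMulVec u (l y))) x =
      vecMulVec u (fderiv ℝ l x w)
      - (g x)⁻¹ * dirDeriv w g x * (g x)⁻¹ * (vecMulVec u (l x))ᵀ * g x
      + (g x)⁻¹ * (vecMulVec u (fderiv ℝ l x w))ᵀ * g x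
      + (g x)⁻¹ * (vecMulVec u (l x))ᵀ * dirDeriv w g x := by
  have hgs : SmoothEntries g U := hg.smooth
  have hG := SmoothEntries.inv hgs hg.nondeg
  have hE : SmoothEntries (fun y => vecMulVec u (l y)) U :=
    SmoothEntries.vecMulVec contDiffOn_const hl
  have hlx : DifferentiableAt ℝ l x := (hl.contDiffAt (hU.mem_nhds hx)).differentiableAt (by simp)
  simp only [addAdjoint]
  rw [dirDeriv_add hU hx hE ((hG.mul hE.transpose).mul hgs),
    dirDeriv_mul hU hx (hG.mul hE.transpose) hgs, dirDeriv_mul hU hx hG hE.transpose,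
    dirDeriv_transpose, dirDeriv_vecMulVec_const hlx, dirDeriv_metric_inv hU hg hx]
  noncomm_ring

theorem IsMetricOn.smoothEntries_addAdjoint_vecMulVec (hg : IsMetricOn g U) {l : (ι → ℝ) → ι → ℝ}
    (hl : ContDiffOn ℝ (⊤ : ℕ∞) l U) (u : ι → ℝ) :
    SmoothEntries (fun y => addAdjoint (g y) (vecMulVec u (l y))) U := by
  have hE : SmoothEntries (fun y => vecMulVec u (l y)) U :=
    SmoothEntries.vecMulVec contDiffOn_const hl
  exact hE.add (((SmoothEntries.inv hg.smooth hg.nondeg).mul hE.transpose).mul hg.smooth)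

/-- For a projective vector field `v` and `L` compatible with `g`, the Lie derivative of the
weighted tensor of `L` is again compatible with `g`. -/
theorem IsProjectiveVF.compatible_projLieEnd (hU : IsOpen U) (hg : IsMetricOn g U)
    (hv : IsProjectiveVF g v U) (hL : SmoothEntries L U)
    (hLsa : ∀ x ∈ U, (g x * L x)ᵀ = g x * L x) (hLc : Compatible g L U) :
    Compatible g (projLieEnd g v L) U := by
  obtain ⟨φ, hφ⟩ := hv.exists_dirDeriv_connMatrix
  have hgs : SmoothEntries g U := hg.smooth
  have hJ := SmoothEntries.jacobian hU hv.1
  have hA := hg.smoothEntries_projLieMetric hU hv.1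
  have hl := hL.dTrace hU
  refine compatible_of_dirDeriv_eq hU hg (hg.smoothEntries_projLieEnd hU hL hv.1) fun x hx =>
    ⟨fderiv ℝ (dTrace L) x (v x) + dTrace L x ᵥ* jacobian v x - (2 : ℝ) • (φ x ᵥ* L x)
      - dTrace L x ᵥ* projLieMetric g v x, fun r => ?_⟩
  have hvx : DifferentiableAt ℝ v x :=
    (hv.1.contDiffAt (hU.mem_nhds hx)).differentiableAt (by simp)
  have hN := SmoothEntries.dirDeriv hU hL hv.1
  have hΓ := SmoothEntries.connMatrix hU hgs hg.nondeg (Pi.single r 1)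
  have hE := hg.smoothEntries_addAdjoint_vecMulVec hl (Pi.single r 1)
  have hA1 := dirDeriv_projLieMetric hU hg hv.1 hx (hφ x hx r)
  have hdK : dirDeriv (Pi.single r 1) (projLieEnd g v L) x =
      dirDeriv (v x) (fun y => dirDeriv (Pi.single r 1) L y) x
      + dirDeriv (jacobian v x *ᵥ Pi.single r 1) L x
      - (dirDeriv (Pi.single r 1) (jacobian v) x * L x
        + jacobian v x * dirDeriv (Pi.single r 1) L x)
      + (dirDeriv (Pi.single r 1) L x * jacobian v x
        + L x * dirDeriv (Pi.single r 1) (jacobian v) x)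
      - (dirDeriv (Pi.single r 1) L x * projLieMetric g v x
        + L x * dirDeriv (Pi.single r 1) (projLieMetric g v) x) := by
    have hLie := SmoothEntries.lieDerivEnd hU hL hv.1
    change dirDeriv (Pi.single r 1) (fun y => lieDerivEnd v L y - L y * projLieMetric g v y) x = _
    rw [dirDeriv_sub hU hx hLie (hL.mul hA), dirDeriv_mul hU hx hL hA,
      funext (lieDerivEnd_eq v L), dirDeriv_add hU hx (hN.sub (hJ.mul hL)) (hL.mul hJ),
      dirDeriv_sub hU hx hN (hJ.mul hL), dirDeriv_mul hU hx hJ hL, dirDeriv_mul hU hx hL hJ,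
      dirDeriv_dirDeriv_comm hU hx hL hvx]
  have hLev : dirDeriv (v x) (fun y => dirDeriv (Pi.single r 1) L y) x =
      (1 / 2 : ℝ) • dirDeriv (v x)
        (fun y => addAdjoint (g y) (vecMulVec (Pi.single r 1) (dTrace L y))) x
      - (dirDeriv (v x) (connMatrix g (Pi.single r 1)) x * L x
        + connMatrix g (Pi.single r 1) x * dirDeriv (v x) L x)
      + (dirDeriv (v x) L x * connMatrix g (Pi.single r 1) x
        + L x * dirDeriv (v x) (connMatrix g (Pi.single r 1)) x) := by
    rw [dirDeriv_congr hU hx (fun y hy => hLc.dirDeriv_eq hy _),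
      dirDeriv_add hU hx ((hE.const_smul _).sub (hΓ.mul hL)) (hL.mul hΓ),
      dirDeriv_sub hU hx (hE.const_smul _) (hΓ.mul hL), dirDeriv_const_smul hU hx hE,
      dirDeriv_mul hU hx hΓ hL, dirDeriv_mul hU hx hL hΓ]
  have hinv := Matrix.nonsing_inv_mul _ (hg.nondeg x hx)
  have hinv_left (X : Matrix ι ι ℝ) : (g x)⁻¹ * (g x * X) = X := by
    rw [← Matrix.mul_assoc, hinv, Matrix.one_mul]
  have hinv_right (X : Matrix ι ι ℝ) : g x * ((g x)⁻¹ * X) = X := by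
    rw [← Matrix.mul_assoc, Matrix.mul_nonsing_inv _ (hg.nondeg x hx), Matrix.one_mul]
  have htranspose {X : Matrix ι ι ℝ} (hX : (g x * X)ᵀ = g x * X) :
      Xᵀ = g x * (X * (g x)⁻¹) := by
    rw [← Matrix.mul_assoc, ← hX, transpose_mul, hg.symm x hx, Matrix.mul_assoc,
      Matrix.mul_nonsing_inv _ (hg.nondeg x hx), Matrix.mul_one]
  have hLt := htranspose (hLsa x hx)
  have hAt := htranspose (metric_mul_projLieMetric_transpose (v := v) hU hg hx)
  obtain ⟨c, hgv⟩ : ∃ c : ℝ, dirDeriv (v x) g x =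
      g x * projLieMetric g v x + c • g x - (jacobian v x)ᵀ * g x - g x * jacobian v x := by
    refine ⟨((g x)⁻¹ * lieDerivMetric g v x).trace / (Fintype.card ι + 1), ?_⟩
    rw [metric_mul_projLieMetric hg hx, lieDerivMetric_eq, sub_add_cancel]
    abel
  rw [hdK, hLev, dirDeriv_compatible_rhs hU hg hl hx, hLc.dirDeriv_eq hx (Pi.single r 1),
    hLc.dirDeriv_eq hx (jacobian v x *ᵥ Pi.single r 1), hA1, hφ x hx r, projLieEnd, lieDerivEnd_eq, hgv]
  simp only [vecMulVec_add, vecMulVec_sub, vecMulVec_smul, ← vecMulVec_mul, ← mul_vecMulVec]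
  generalize vecMulVec (Pi.single r (1 : ℝ)) (dTrace L x) = E
  generalize vecMulVec (Pi.single r (1 : ℝ)) (φ x) = F
  generalize vecMulVec (Pi.single r (1 : ℝ)) (fderiv ℝ (dTrace L) x (v x)) = E'
  simp only [addAdjoint, transpose_add, transpose_sub, transpose_mul, transpose_smul, hLt, hAt,
    Matrix.mul_add, Matrix.add_mul, Matrix.mul_sub, Matrix.sub_mul, Matrix.smul_mul,
    Matrix.mul_smul, Matrix.one_mul, Matrix.mul_one, Matrix.mul_assoc, hinv_left, hinv_right, hinv]
  module

end Projective

theorem stmt7 {n : ℕ} (U : Set (Fin n → ℝ)) (hU : IsOpen U) (hconn : IsConnected U)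
    (p : Fin n → ℝ) (hp : p ∈ U)
    (g : (Fin n → ℝ) → Matrix (Fin n) (Fin n) ℝ) (hg : IsMetricOn g U)
    (v : (Fin n → ℝ) → Fin n → ℝ) (hv : IsProjectiveVF g v U)
    (L : (Fin n → ℝ) → Matrix (Fin n) (Fin n) ℝ)
    (hLsmooth : ∀ i j, ContDiffOn ℝ (⊤ : ℕ∞) (fun x => L x i j) U)
    -- `L` is `g`-self-adjoint
    (hLsa : ∀ x ∈ U, (g x * L x)ᵀ = g x * L x)
    -- `L` is compatible with `g` and nondegenerate
    (hLcomp : Compatible g L U)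
    (hLdet : ∀ x ∈ U, IsUnit (L x).det)
    -- the degree of mobility of `g` is 2 and `{Id, L}` is a basis of the space of
    -- (1,1)-tensors compatible with `g`: every compatible tensor is a constant
    -- linear combination of `Id` and `L` …
    (hspan : ∀ L' : (Fin n → ℝ) → Matrix (Fin n) (Fin n) ℝ,
      (∀ i j, ContDiffOn ℝ (⊤ : ℕ∞) (fun x => L' x i j) U) →
      (∀ x ∈ U, (g x * L' x)ᵀ = g x * L' x) →
      Compatible g L' U →
      ∃ a b : ℝ, ∀ x ∈ U, L' x = a • L x + b • (1 : Matrix (Fin n) (Fin n) ℝ))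
    -- … and `Id`, `L` are linearly independent
    (hindep : ∀ a b : ℝ,
      (∀ x ∈ U, a • L x + b • (1 : Matrix (Fin n) (Fin n) ℝ) = 0) → a = 0 ∧ b = 0) :
    -- then `𝓛_v L = α·L² + β·L + γ·Id` with
    -- `β = −𝓛_v(log|det L|) + α·tr L + γ·tr L⁻¹ + ν` for some constants `α, γ, ν`
    ∃ α γ ν : ℝ, ∀ x ∈ U,
      lieDerivEnd v L x
        = α • (L x * L x)
          + ((- (∑ m, v x m * pd m (fun y => Real.log |(L y).det|) x))
              + α * (L x).trace + γ * ((L x)⁻¹).trace + ν) • L x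
          + γ • (1 : Matrix (Fin n) (Fin n) ℝ) := by
  have hL : SmoothEntries L U := hLsmooth
  obtain ⟨a, b, hab⟩ := hspan (projLieMetric g v) (hg.smoothEntries_projLieMetric hU hv.1)
    (fun x hx => metric_mul_projLieMetric_transpose hU hg hx)
    (hv.compatible_projLieMetric hU hg)
  obtain ⟨c, d, hcd⟩ := hspan (projLieEnd g v L) (hg.smoothEntries_projLieEnd hU hL hv.1)
    (fun x hx => metric_mul_projLieEnd_transpose hU hg hL hLsa hx)
    (hv.compatible_projLieEnd hU hg hL hLsa hLcomp)
  have hLie (x) (hx : x ∈ U) :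
      lieDerivEnd v L x = a • (L x * L x) + (b + c) • L x + d • 1 := by
    have h := hcd x hx
    rw [projLieEnd, hab x hx, sub_eq_iff_eq_add] at h
    rw [h, Matrix.mul_add, Matrix.mul_smul, Matrix.mul_smul, Matrix.mul_one]
    module
  refine ⟨a, d, (n + 1) * (b + c), fun x hx => ?_⟩
  have hlog : ∑ m, v x m * pd m (fun y => Real.log |(L y).det|) x =
      a * (L x).trace + (b + c) * n + d * ((L x)⁻¹).trace := by
    have hinv := Matrix.nonsing_inv_mul _ (hLdet x hx)
    have htr : ((L x)⁻¹ * lieDerivEnd v L x).trace = ((L x)⁻¹ * dirDeriv (v x) L x).trace := by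
      rw [lieDerivEnd_eq, Matrix.mul_add, Matrix.mul_sub, ← Matrix.mul_assoc _ (L x), hinv,
        trace_add, trace_sub, ← Matrix.mul_assoc, trace_mul_comm _ (L x), ← Matrix.mul_assoc,
        Matrix.mul_nonsing_inv _ (hLdet x hx), sub_add_cancel]
    rw [← fderiv_apply_eq_sum_pd, fderiv_log_abs_det hU hx hL (hLdet x hx), ← htr, hLie x hx]
    simp [Matrix.mul_add, ← Matrix.mul_assoc, hinv, trace_add, trace_smul]
  rw [hlog, hLie x hx]
  congr 3
  ring
end
end

section
/- In the setting where g has degree of mobility 2, v is a projective vector field for g, L is compatible with g, det L ≠ 0, {Id, L} spans the space of g-compatible tensors, and 𝓛_v L = α·L² + β·L + γ·Id as above: let χ = χ1·χ2 be an admissible factorisation of the characteristic polynomial of L and let (x¹,…,x^r, y^{r+1},…,y^n) be the local coordinate system induced by this factorisation (so that ∂_{x^i} span ker χ1(L) and ∂_{y^j} span ker χ2(L)). Then the projective vector field splits: v = Σ_{i=1}^r v^i(x) ∂_{x^i} + Σ_{j=r+1}^n v^j(y) ∂_{y^j}, i.e., the first r components of v do not depend on the y-coordinates and the last n−r components do not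 depend on the x-coordinates; moreover, the function β is constant. -/
open Matrix Polynomial Filter

noncomputable section

variable {ι : Type} [Fintype ι] [DecidableEq ι]

/-- The span of the first `r` coordinate vector fields (`∂_{x^1},…,∂_{x^r}`). -/
def coordSpan (n r : ℕ) : Submodule ℝ (Fin n → ℝ) :=
  Submodule.span ℝ {e : Fin n → ℝ | ∃ i : Fin n, (i : ℕ) < r ∧ e = Pi.single i 1}

/-- The span of the last `n - r` coordinate vector fields (`∂_{y^{r+1}},…,∂_{y^n}`). -/
def coordSpan' (n r : ℕ) : Submodule ℝ (Fin n → ℝ) :=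
  Submodule.span ℝ {e : Fin n → ℝ | ∃ i : Fin n, r ≤ (i : ℕ) ∧ e = Pi.single i 1}

theorem isCoprime_of_no_common_complex_root {f h : ℝ[X]}
    (hfh : ¬ ∃ z : ℂ, aeval z f = 0 ∧ aeval z h = 0) : IsCoprime f h := by
  rw [Polynomial.isCoprime_iff_aeval_ne_zero_of_isAlgClosed ℝ ℂ]
  intro z
  by_contra! hz
  exact hfh ⟨z, hz⟩

theorem mem_span_single_iff (p : ι → Prop) (w : ι → ℝ) :
    w ∈ Submodule.span ℝ {e : ι → ℝ | ∃ i, p i ∧ e = Pi.single i 1} ↔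
      ∀ i, ¬ p i → w i = 0 := by
  constructor
  · intro hw i hi
    induction hw using Submodule.span_induction with
    | mem e he =>
      obtain ⟨j, hj, rfl⟩ := he
      exact Pi.single_eq_of_ne (by rintro rfl; exact hi hj) _
    | zero => rfl
    | add a b _ _ ha hb => simp [ha, hb]
    | smul c a _ ha => simp [ha]
  · intro hw
    rw [pi_eq_sum_univ' w]
    refine Submodule.sum_mem _ fun i _ => ?_
    by_cases hi : p i
    · exact Submodule.smul_mem _ _ (Submodule.subset_span ⟨i, hi, rfl⟩)
    · simp [hw i hi]

/-- The kernel of `f(M)` is spanned by the coordinate vectors whose index satisfies `p`. -/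
def KerIsCoord (M : Matrix ι ι ℝ) (f : ℝ[X]) (p : ι → Prop) : Prop :=
  ∀ w : ι → ℝ, aeval M f *ᵥ w = 0 ↔ ∀ i, ¬ p i → w i = 0

theorem KerIsCoord.mul_eq_zero_iff {M : Matrix ι ι ℝ} {f : ℝ[X]} {p : ι → Prop}
    (hK : KerIsCoord M f p) (B : Matrix ι ι ℝ) :
    aeval M f * B = 0 ↔ ∀ i j, ¬ p i → B i j = 0 := by
  constructor
  · intro hB i j hi
    refine (hK (fun a => B a j)).1 ?_ i hi
    ext a
    exact congrFun (congrFun hB a) j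
  · intro hB
    ext a j
    exact congrFun ((hK (fun a => B a j)).2 fun i hi => hB i j hi) a

theorem KerIsCoord.apply_eq_zero {M : Matrix ι ι ℝ} {f : ℝ[X]} {p : ι → Prop}
    (hK : KerIsCoord M f p) {i j : ι} (hi : ¬ p i) (hj : p j) : M i j = 0 := by
  have h0 : aeval M f *ᵥ (Pi.single j 1) = 0 :=
    (hK _).2 fun a ha => Pi.single_eq_of_ne (by rintro rfl; exact ha hj) _
  have hcomm : aeval M f * M = M * aeval M f := by
    have := congrArg (aeval M) (mul_comm f X)
    simpa using this
  have h1 : aeval M f *ᵥ (M *ᵥ Pi.single j 1) = 0 := by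
    rw [mulVec_mulVec, hcomm, ← mulVec_mulVec, h0, mulVec_zero]
  simpa using (hK _).1 h1 i hi

/-- A Sylvester-type rigidity: an off-diagonal block intertwining two blocks of `M` with
coprime characteristic polynomials vanishes. -/
theorem eq_zero_of_intertwines {M : Matrix ι ι ℝ} {f h : ℝ[X]} {p : ι → Prop}
    (hK : KerIsCoord M f p) (hfh : M.charpoly = f * h) (hco : IsCoprime f h)
    {B : Matrix ι ι ℝ} (hrow : ∀ i j, ¬ p i → B i j = 0) (hcol : ∀ i j, p j → B i j = 0)
    (hcomm : M * B = B * M) : B = 0 := by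
  have hf : aeval M f * B = 0 := (hK.mul_eq_zero_iff B).2 hrow
  have hfh0 : aeval M f * aeval M h = 0 := by
    rw [← map_mul, ← hfh, aeval_self_charpoly]
  have hh : B * aeval M h = 0 := by
    ext a j
    refine Finset.sum_eq_zero fun m _ => ?_
    by_cases hm : p m
    · simp [hcol a m hm]
    · simp [(hK.mul_eq_zero_iff _).1 hfh0 m j hm]
  have hB : aeval M h * B = B * aeval M h := by
    clear hfh hco hfh0 hh
    induction h using Polynomial.induction_on' with
    | add a b ha hb => simp only [map_add, add_mul, mul_add, ha, hb]
    | monomial k c =>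
      have hk : M ^ k * B = B * M ^ k := (show Commute M B from hcomm).pow_left k
      simp [aeval_monomial, Algebra.algebraMap_eq_smul_one, hk]
  obtain ⟨a, b, hab⟩ := hco
  have h1 := congrArg (fun q => aeval M q * B) hab
  simp only [map_add, map_mul, map_one, one_mul, add_mul, mul_assoc, hf, hB, hh, mul_zero,
    add_zero] at h1
  exact h1.symm

theorem offDiagonal_eq_zero_of_intertwines {M : Matrix ι ι ℝ} {f h : ℝ[X]} {p : ι → Prop}
    (hf : KerIsCoord M f p) (hh : KerIsCoord M h (¬ p ·)) (hfh : M.charpoly = f * h)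
    (hco : IsCoprime f h) {C : Matrix ι ι ℝ}
    (hC : ∀ i k, p i → ¬ p k → ∑ m, M i m * C m k = ∑ m, C i m * M m k)
    {i k : ι} (hi : p i) (hk : ¬ p k) : C i k = 0 := by
  classical
  have hzero : ∀ {i k}, p i → ¬ p k → M i k = 0 := fun hi hk =>
    hh.apply_eq_zero (not_not.2 hi) hk
  have hzero' : ∀ {i k}, ¬ p i → p k → M i k = 0 := fun hi hk => hf.apply_eq_zero hi hk
  let B : Matrix ι ι ℝ := Matrix.of fun i k => if p i ∧ ¬ p k then C i k else 0
  have hB : B = 0 := by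
    refine eq_zero_of_intertwines hf hfh hco
      (fun i k hi => by simp [B, hi]) (fun i k hk => by simp [B, hk]) ?_
    ext i k
    simp only [mul_apply]
    by_cases hik : p i ∧ ¬ p k
    · obtain ⟨hi, hk⟩ := hik
      have hl : ∑ m, M i m * B m k = ∑ m, M i m * C m k :=
        Finset.sum_congr rfl fun m _ => by
          by_cases hm : p m
          · simp [B, hm, hk]
          · simp [hzero hi hm]
      have hr : ∑ m, B i m * M m k = ∑ m, C i m * M m k :=
        Finset.sum_congr rfl fun m _ => by
          by_cases hm : p m
          · simp [hzero hm hk]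
          · simp [B, hm, hi]
      rw [hl, hr, hC i k hi hk]
    · rw [Finset.sum_eq_zero, Finset.sum_eq_zero]
      · intro m _
        by_cases hi : p i
        · have hk : p k := by tauto
          by_cases hm : p m
          · simp [B, hm]
          · simp [hzero' hm hk]
        · simp [B, hi]
      · intro m _
        by_cases hk : p k
        · simp [B, hk]
        · have hi : ¬ p i := by tauto
          by_cases hm : p m
          · simp [hzero' hi hm]
          · simp [B, hm]
  simpa [B, hi, hk] using congrFun (congrFun hB i) k

theorem pd_congr {U : Set (ι → ℝ)} (hU : IsOpen U) {F G : (ι → ℝ) → ℝ}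
    (h : ∀ x ∈ U, F x = G x) (j : ι) {x : ι → ℝ} (hx : x ∈ U) : pd j F x = pd j G x := by
  unfold pd
  rw [Filter.EventuallyEq.fderiv_eq (eventually_of_mem (hU.mem_nhds hx) h)]

theorem pd_eq_zero_of_eq_zero {U : Set (ι → ℝ)} (hU : IsOpen U) {F : (ι → ℝ) → ℝ}
    (h : ∀ x ∈ U, F x = 0) (j : ι) {x : ι → ℝ} (hx : x ∈ U) : pd j F x = 0 := by
  rw [pd_congr hU h j hx]
  simp [pd]

theorem contDiffOn_pd {U : Set (ι → ℝ)} (hU : IsOpen U) {F : (ι → ℝ) → ℝ}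
    (hF : ContDiffOn ℝ (⊤ : ℕ∞) F U) (j : ι) : ContDiffOn ℝ (⊤ : ℕ∞) (pd j F) U :=
  (hF.fderiv_of_isOpen hU (m := (⊤ : ℕ∞)) le_rfl).clm_apply contDiffOn_const

theorem pd_pd_comm {U : Set (ι → ℝ)} (hU : IsOpen U) {F : (ι → ℝ) → ℝ}
    (hF : ContDiffOn ℝ (⊤ : ℕ∞) F U) (j k : ι) {x : ι → ℝ} (hx : x ∈ U) :
    pd j (pd k F) x = pd k (pd j F) x := by
  have hd : DifferentiableAt ℝ (fderiv ℝ F) x :=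
    ((hF.fderiv_of_isOpen hU (m := (⊤ : ℕ∞)) le_rfl).differentiableOn (by simp)).differentiableAt
      (hU.mem_nhds hx)
  have key : ∀ a b : ι, pd a (pd b F) x
      = fderiv ℝ (fderiv ℝ F) x (Pi.single a 1) (Pi.single b 1) := by
    intro a b
    have : pd b F = fun y => fderiv ℝ F y (Pi.single b 1) := rfl
    rw [this, pd, fderiv_clm_apply hd (differentiableAt_const _)]
    simp
  rw [key, key]
  have hs : IsSymmSndFDerivAt ℝ F x :=
    (hF.contDiffAt (hU.mem_nhds hx)).isSymmSndFDerivAt (by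
      rw [minSmoothness_of_isRCLikeNormedField]
      exact WithTop.coe_le_coe.2 le_top)
  exact hs _ _

/-- `F` is differentiable on `U` and does not depend on the `k`-th coordinate there. -/
def IndepOf (U : Set (ι → ℝ)) (k : ι) (F : (ι → ℝ) → ℝ) : Prop :=
  DifferentiableOn ℝ F U ∧ ∀ x ∈ U, pd k F x = 0

namespace IndepOf

variable {U : Set (ι → ℝ)} {k : ι} {F G : (ι → ℝ) → ℝ}

theorem congr (hU : IsOpen U) (hF : IndepOf U k F) (h : ∀ x ∈ U, G x = F x) :
    IndepOf U k G :=
  ⟨hF.1.congr h, fun x hx => by rw [pd_congr hU h k hx, hF.2 x hx]⟩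

theorem const (c : ℝ) : IndepOf U k (fun _ => c) :=
  ⟨differentiableOn_const c, fun x _ => by simp [pd]⟩

theorem of_eq_zero (hU : IsOpen U) (h : ∀ x ∈ U, F x = 0) : IndepOf U k F :=
  (const 0).congr hU h

theorem add (hU : IsOpen U) (hF : IndepOf U k F) (hG : IndepOf U k G) :
    IndepOf U k (fun x => F x + G x) := by
  refine ⟨hF.1.add hG.1, fun x hx => ?_⟩
  have h1 := hF.1.differentiableAt (hU.mem_nhds hx)
  have h2 := hG.1.differentiableAt (hU.mem_nhds hx)
  have e1 := hF.2 x hx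
  have e2 := hG.2 x hx
  unfold pd at *
  rw [fderiv_fun_add h1 h2]
  simp [e1, e2]

theorem mul (hU : IsOpen U) (hF : IndepOf U k F) (hG : IndepOf U k G) :
    IndepOf U k (fun x => F x * G x) := by
  refine ⟨hF.1.mul hG.1, fun x hx => ?_⟩
  have h1 := hF.1.differentiableAt (hU.mem_nhds hx)
  have h2 := hG.1.differentiableAt (hU.mem_nhds hx)
  have e1 := hF.2 x hx
  have e2 := hG.2 x hx
  unfold pd at *
  rw [fderiv_fun_mul h1 h2]
  simp [e1, e2]

theorem sub (hU : IsOpen U) (hF : IndepOf U k F) (hG : IndepOf U k G) :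
    IndepOf U k (fun x => F x - G x) :=
  (hF.add hU ((const (-1)).mul hU hG)).congr hU fun x _ => by ring

theorem sum (hU : IsOpen U) {κ : Type} (s : Finset κ) {H : κ → (ι → ℝ) → ℝ}
    (h : ∀ m, IndepOf U k (H m)) : IndepOf U k (fun x => ∑ m ∈ s, H m x) := by
  classical
  induction s using Finset.induction_on with
  | empty => simpa using const (U := U) (k := k) 0
  | insert a s ha ih =>
    simp only [Finset.sum_insert ha]
    exact (h a).add hU ih

theorem pd (hU : IsOpen U) (hs : ContDiffOn ℝ (⊤ : ℕ∞) F U) (hF : IndepOf U k F) (m : ι) :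
    IndepOf U k (pd m F) :=
  ⟨(contDiffOn_pd hU hs m).differentiableOn (by simp), fun x hx => by
    rw [pd_pd_comm hU hs k m hx, pd_eq_zero_of_eq_zero hU hF.2 m hx]⟩

theorem of_contDiffOn (hs : ContDiffOn ℝ (⊤ : ℕ∞) F U) (h : ∀ x ∈ U, _root_.pd k F x = 0) :
    IndepOf U k F :=
  ⟨hs.differentiableOn (by simp), h⟩

end IndepOf

theorem christoffel_symm {g : (ι → ℝ) → Matrix ι ι ℝ} {U : Set (ι → ℝ)} (hU : IsOpen U)
    (hg : IsMetricOn g U) {x : ι → ℝ} (hx : x ∈ U) (i j k : ι) :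
    christoffel g x i j k = christoffel g x i k j := by
  unfold christoffel
  congr 1
  refine Finset.sum_congr rfl fun m _ => ?_
  have : pd m (fun y => g y j k) x = pd m (fun y => g y k j) x :=
    pd_congr hU (fun y hy => congrFun (congrFun (hg.symm y hy) k) j) m hx
  rw [this]
  ring

/-- The Nijenhuis torsion of a tensor compatible with a metric vanishes. -/
theorem nijenhuis_eq_zero {g L : (ι → ℝ) → Matrix ι ι ℝ} {U : Set (ι → ℝ)} (hU : IsOpen U)
    (hg : IsMetricOn g U) (hsa : ∀ x ∈ U, (g x * L x)ᵀ = g x * L x)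
    (hcomp : Compatible g L U) {x : ι → ℝ} (hx : x ∈ U) (a j c : ι) :
    (∑ m, L x m j * pd m (fun y => L y a c) x) - (∑ m, L x m c * pd m (fun y => L y a j) x)
      - (∑ m, L x a m * pd j (fun y => L y m c) x)
      + (∑ m, L x a m * pd c (fun y => L y m j) x) = 0 := by
  set l : ι → ℝ := fun s => pd s (fun y => (L y).trace) x with hl
  set s : ι → ℝ := fun i => ∑ s, (g x)⁻¹ i s * l s with hs
  have hgs : ∀ i j, g x i j = g x j i := fun i j => congrFun (congrFun (hg.symm x hx) j) i
  have hG : ∑ m, L x m j * g x m c = ∑ m, L x m c * g x m j := by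
    have h := congrFun (congrFun (hsa x hx) c) j
    simp only [transpose_apply, mul_apply] at h
    calc ∑ m, L x m j * g x m c = ∑ m, g x c m * L x m j :=
          Finset.sum_congr rfl fun m _ => by rw [hgs m c, mul_comm]
      _ = ∑ m, g x j m * L x m c := h.symm
      _ = _ := Finset.sum_congr rfl fun m _ => by rw [hgs m j, mul_comm]
  have hpd : ∀ r i k, pd r (fun y => L y i k) x
      = 1 / 2 * ((if i = r then 1 else 0) * l k + s i * g x r k)
        - (∑ m, christoffel g x i r m * L x m k) + ∑ m, christoffel g x m r k * L x i m := by
    intro r i k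
    have h := hcomp x hx r i k
    unfold covDerivT at h
    simp only [hs, hl]
    linarith
  have hΓ := christoffel_symm hU hg hx
  set Γ := christoffel g x
  have lower : ∀ b d, ∑ m, L x m b * pd m (fun y => L y a d) x
      = 1 / 2 * (L x a b * l d + s a * ∑ m, L x m b * g x m d)
        - (∑ m, ∑ k, L x m b * Γ a m k * L x k d) + ∑ m, ∑ k, L x m b * Γ k m d * L x a k := by
    intro b d
    simp only [hpd, mul_add, mul_sub, Finset.sum_add_distrib, Finset.sum_sub_distrib,
      Finset.mul_sum, mul_assoc]
    congr 3
    · simp [mul_left_comm]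
    · exact Finset.sum_congr rfl fun m _ => by ring
  have upper : ∀ b d, ∑ m, L x a m * pd b (fun y => L y m d) x
      = 1 / 2 * (L x a b * l d + (∑ m, L x a m * s m) * g x b d)
        - (∑ m, ∑ k, L x a m * Γ m b k * L x k d) + ∑ m, ∑ k, L x a m * Γ k b d * L x m k := by
    intro b d
    simp only [hpd, mul_add, mul_sub, Finset.sum_add_distrib, Finset.sum_sub_distrib,
      Finset.mul_sum, Finset.sum_mul, mul_assoc]
    congr 3
    · simp [mul_left_comm]
    · exact Finset.sum_congr rfl fun m _ => by ring
  have e1 : ∑ m, ∑ k, L x m j * Γ a m k * L x k c = ∑ m, ∑ k, L x m c * Γ a m k * L x k j := by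
    rw [Finset.sum_comm]
    exact Finset.sum_congr rfl fun m _ => Finset.sum_congr rfl fun k _ => by
      rw [hΓ a k m]; ring
  have e2 : ∀ b d, ∑ m, ∑ k, L x m b * Γ k m d * L x a k
      = ∑ m, ∑ k, L x a m * Γ m d k * L x k b := by
    intro b d
    rw [Finset.sum_comm]
    exact Finset.sum_congr rfl fun m _ => Finset.sum_congr rfl fun k _ => by
      rw [hΓ m k d]; ring
  have e3 : ∑ m, ∑ k, L x a m * Γ k j c * L x m k = ∑ m, ∑ k, L x a m * Γ k c j * L x m k :=
    Finset.sum_congr rfl fun m _ => Finset.sum_congr rfl fun k _ => by rw [hΓ k j c]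
  rw [lower j c, lower c j, upper j c, upper c j, e1, e2, e2, e3, hG, hgs j c]
  ring

/-- In adapted coordinates a block of a compatible tensor depends only on its own coordinates. -/
theorem pd_block_eq_zero {g L : (ι → ℝ) → Matrix ι ι ℝ} {U : Set (ι → ℝ)} (hU : IsOpen U)
    (hg : IsMetricOn g U) (hsa : ∀ x ∈ U, (g x * L x)ᵀ = g x * L x)
    (hcomp : Compatible g L U) {f h : (ι → ℝ) → ℝ[X]} {p : ι → Prop}
    (hfh : ∀ x ∈ U, (L x).charpoly = f x * h x) (hco : ∀ x ∈ U, IsCoprime (f x) (h x))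
    (hf : ∀ x ∈ U, KerIsCoord (L x) (f x) p) (hh : ∀ x ∈ U, KerIsCoord (L x) (h x) (¬ p ·))
    {x : ι → ℝ} (hx : x ∈ U) {a c j : ι} (ha : p a) (hj : ¬ p j) :
    pd j (fun y => L y a c) x = 0 := by
  have hzero : ∀ y ∈ U, ∀ {i k}, p i → ¬ p k → L y i k = 0 := fun y hy i k hi hk =>
    (hh y hy).apply_eq_zero (not_not.2 hi) hk
  refine offDiagonal_eq_zero_of_intertwines (hf x hx) (hh x hx) (hfh x hx) (hco x hx)
    (C := Matrix.of fun i k => pd k (fun y => L y i c) x) (fun i k hi hk => ?_) ha hj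
  have hN := nijenhuis_eq_zero hU hg hsa hcomp hx i k c
  have h1 : ∑ m, L x m c * pd m (fun y => L y i k) x = 0 :=
    Finset.sum_eq_zero fun m _ => by
      rw [pd_eq_zero_of_eq_zero hU (fun y hy => hzero y hy hi hk) m hx, mul_zero]
  have h2 : ∑ m, L x i m * pd c (fun y => L y m k) x = 0 :=
    Finset.sum_eq_zero fun m _ => by
      by_cases hm : p m
      · rw [pd_eq_zero_of_eq_zero hU (fun y hy => hzero y hy hm hk) c hx, mul_zero]
      · rw [hzero x hx hi hm, zero_mul]
  simp only [of_apply, mul_comm _ (L x _ k)]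
  linarith

/-- A vector field whose Lie derivative preserves the block structure of `L` splits. -/
theorem pd_component_eq_zero {L : (ι → ℝ) → Matrix ι ι ℝ} {v : (ι → ℝ) → ι → ℝ}
    {U : Set (ι → ℝ)} (hU : IsOpen U) {f h : (ι → ℝ) → ℝ[X]} {p : ι → Prop}
    (hfh : ∀ x ∈ U, (L x).charpoly = f x * h x) (hco : ∀ x ∈ U, IsCoprime (f x) (h x))
    (hf : ∀ x ∈ U, KerIsCoord (L x) (f x) p) (hh : ∀ x ∈ U, KerIsCoord (L x) (h x) (¬ p ·))
    (hlie : ∀ x ∈ U, ∀ i j, p i → ¬ p j → lieDerivEnd v L x i j = 0)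
    {x : ι → ℝ} (hx : x ∈ U) {i j : ι} (hi : p i) (hj : ¬ p j) :
    pd j (fun y => v y i) x = 0 := by
  refine offDiagonal_eq_zero_of_intertwines (hf x hx) (hh x hx) (hfh x hx) (hco x hx)
    (C := Matrix.of fun i k => pd k (fun y => v y i) x) (fun i k hi hk => ?_) hi hj
  have hN := hlie x hx i k hi hk
  simp only [lieDerivEnd, of_apply] at hN
  have h1 : ∑ m, v x m * pd m (fun y => L y i k) x = 0 :=
    Finset.sum_eq_zero fun m _ => by
      rw [pd_eq_zero_of_eq_zero hU
        (fun y hy => (hh y hy).apply_eq_zero (not_not.2 hi) hk) m hx, mul_zero]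
  simp only [of_apply, mul_comm (L x i _)]
  linarith

/-- The coefficient `β` in `𝓛_v L = α L² + β L + γ` does not depend on the coordinates
complementary to a nonempty block, once `L` and `v` split. -/
theorem coefficient_pd_eq_zero {L : (ι → ℝ) → Matrix ι ι ℝ} {v : (ι → ℝ) → ι → ℝ}
    {U : Set (ι → ℝ)} (hU : IsOpen U) {p : ι → Prop}
    (hL : ∀ i j, ContDiffOn ℝ (⊤ : ℕ∞) (fun x => L x i j) U) (hv : ContDiffOn ℝ (⊤ : ℕ∞) v U)
    (hdet : ∀ x ∈ U, IsUnit (L x).det)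
    (hzero : ∀ x ∈ U, ∀ i j, p i → ¬ p j → L x i j = 0)
    (hzero' : ∀ x ∈ U, ∀ i j, ¬ p i → p j → L x i j = 0)
    (hLpd : ∀ x ∈ U, ∀ a c j, p a → p c → ¬ p j → pd j (fun y => L y a c) x = 0)
    (hvpd : ∀ x ∈ U, ∀ i j, p i → ¬ p j → pd j (fun y => v y i) x = 0)
    {α γ : ℝ} {β : (ι → ℝ) → ℝ}
    (hlie : ∀ x ∈ U, lieDerivEnd v L x
      = α • (L x * L x) + β x • L x + γ • (1 : Matrix ι ι ℝ))
    (hp : ∃ i, p i) {k : ι} (hk : ¬ p k) {x : ι → ℝ} (hx : x ∈ U) :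
    DifferentiableAt ℝ β x ∧ pd k β x = 0 := by
  obtain ⟨i, hi⟩ := hp
  obtain ⟨j, hj, hij⟩ : ∃ j, p j ∧ L x i j ≠ 0 := by
    by_contra! hcon
    refine (hdet x hx).ne_zero (Matrix.det_eq_zero_of_row_eq_zero i fun j => ?_)
    by_cases hj : p j
    · exact hcon j hj
    · exact hzero x hx i j hi hj
  have hLind : ∀ {a c}, p a → p c → IndepOf U k (fun y => L y a c) := fun {a c} ha hc =>
    .of_contDiffOn (hL a c) fun y hy => hLpd y hy a c k ha hc hk
  have hvs : ∀ a, ContDiffOn ℝ (⊤ : ℕ∞) (fun y => v y a) U := contDiffOn_pi.1 hv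
  have hvind : ∀ {a}, p a → IndepOf U k (fun y => v y a) := fun {a} ha =>
    .of_contDiffOn (hvs a) fun y hy => hvpd y hy a k ha hk
  have hF : IndepOf U k (fun y => β y * L y i j) := by
    have h1 : IndepOf U k (fun y => ∑ m, v y m * pd m (fun z => L z i j) y) := by
      refine .sum hU _ fun m => ?_
      by_cases hm : p m
      · exact (hvind hm).mul hU ((hLind hi hj).pd hU (hL i j) m)
      · exact .of_eq_zero hU fun y hy => by rw [hLpd y hy i j m hi hj hm, mul_zero]
    have h2 : IndepOf U k (fun y => ∑ m, pd m (fun z => v z i) y * L y m j) := by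
      refine .sum hU _ fun m => ?_
      by_cases hm : p m
      · exact ((hvind hi).pd hU (hvs i) m).mul hU (hLind hm hj)
      · exact .of_eq_zero hU fun y hy => by rw [hzero' y hy m j hm hj, mul_zero]
    have h3 : IndepOf U k (fun y => ∑ m, pd j (fun z => v z m) y * L y i m) := by
      refine .sum hU _ fun m => ?_
      by_cases hm : p m
      · exact ((hvind hm).pd hU (hvs m) j).mul hU (hLind hi hm)
      · exact .of_eq_zero hU fun y hy => by rw [hzero y hy i m hi hm, mul_zero]
    have h4 : IndepOf U k (fun y => ∑ m, L y i m * L y m j) := by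
      refine .sum hU _ fun m => ?_
      by_cases hm : p m
      · exact (hLind hi hm).mul hU (hLind hm hj)
      · exact .of_eq_zero hU fun y hy => by rw [hzero y hy i m hi hm, zero_mul]
    refine ((((h1.sub hU h2).add hU h3).sub hU ((IndepOf.const α).mul hU h4)).sub hU
      (.const (γ * (1 : Matrix ι ι ℝ) i j))).congr hU fun y hy => ?_
    have h := congrFun (congrFun (hlie y hy) i) j
    simp only [lieDerivEnd, of_apply, Matrix.add_apply, Matrix.smul_apply, smul_eq_mul,
      mul_apply] at h
    linarith
  have hx' := hU.mem_nhds hx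
  have hLd := (hLind hi hj).1.differentiableAt hx'
  have hFd := hF.1.differentiableAt hx'
  have hβ : β =ᶠ[nhds x] fun y => (β y * L y i j) * (L y i j)⁻¹ := by
    filter_upwards [hLd.continuousAt.eventually_ne hij] with y hy
    rw [mul_inv_cancel_right₀ hy]
  have hβd : DifferentiableAt ℝ β x := (hFd.fun_mul (hLd.fun_inv hij)).congr_of_eventuallyEq hβ
  refine ⟨hβd, ?_⟩
  have e1 := hF.2 x hx
  have e2 := (hLind hi hj).2 x hx
  unfold pd at e1 e2 ⊢
  rw [fderiv_fun_mul hβd hLd] at e1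
  simpa [e2, hij] using e1

theorem stmt8 {n r : ℕ} (hr : r ≤ n)
    (U : Set (Fin n → ℝ)) (hU : IsOpen U) (hconn : IsConnected U)
    (g : (Fin n → ℝ) → Matrix (Fin n) (Fin n) ℝ) (hg : IsMetricOn g U)
    (v : (Fin n → ℝ) → Fin n → ℝ) (hv : IsProjectiveVF g v U)
    (L : (Fin n → ℝ) → Matrix (Fin n) (Fin n) ℝ)
    (hLsmooth : ∀ i j, ContDiffOn ℝ (⊤ : ℕ∞) (fun x => L x i j) U)
    (hLsa : ∀ x ∈ U, (g x * L x)ᵀ = g x * L x)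
    (hLcomp : Compatible g L U)
    (hLdet : ∀ x ∈ U, IsUnit (L x).det)
    -- degree of mobility two, with basis `{Id, L}`
    (hspan : ∀ L' : (Fin n → ℝ) → Matrix (Fin n) (Fin n) ℝ,
      (∀ i j, ContDiffOn ℝ (⊤ : ℕ∞) (fun x => L' x i j) U) →
      (∀ x ∈ U, (g x * L' x)ᵀ = g x * L' x) →
      Compatible g L' U →
      ∃ a b : ℝ, ∀ x ∈ U, L' x = a • L x + b • (1 : Matrix (Fin n) (Fin n) ℝ))
    (hindep : ∀ a b : ℝ,
      (∀ x ∈ U, a • L x + b • (1 : Matrix (Fin n) (Fin n) ℝ) = 0) → a = 0 ∧ b = 0)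
    -- the equation `𝓛_v L = α·L² + β·L + γ·Id` of Lemma 2, with
    -- `β = −𝓛_v(log|det L|) + α·tr L + γ·tr L⁻¹ + ν`
    (α γ ν : ℝ) (β : (Fin n → ℝ) → ℝ)
    (hβ : ∀ x ∈ U, β x = (- (∑ m, v x m * pd m (fun y => Real.log |(L y).det|) x))
        + α * (L x).trace + γ * ((L x)⁻¹).trace + ν)
    (hlie : ∀ x ∈ U, lieDerivEnd v L x
      = α • (L x * L x) + β x • L x + γ • (1 : Matrix (Fin n) (Fin n) ℝ))
    -- an admissible factorisation and the induced adapted coordinate system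
    (chi1 chi2 : (Fin n → ℝ) → Polynomial ℝ)
    (hfac : AdmissibleFact L U chi1 chi2)
    (hdeg : ∀ x ∈ U, (chi1 x).natDegree = r)
    (hD1 : ∀ x ∈ U, Dker L chi1 x = coordSpan n r)
    (hD2 : ∀ x ∈ U, Dker L chi2 x = coordSpan' n r) :
    -- then the projective vector field splits …
    (∀ x ∈ U, ∀ i : Fin n, (i : ℕ) < r →
      ∀ m : Fin n, r ≤ (m : ℕ) → pd m (fun y => v y i) x = 0) ∧
    (∀ x ∈ U, ∀ i : Fin n, r ≤ (i : ℕ) →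
      ∀ m : Fin n, (m : ℕ) < r → pd m (fun y => v y i) x = 0) ∧
    -- … and the function `β` is constant
    (∀ x ∈ U, ∀ x' ∈ U, β x = β x') := by
  have hco : ∀ x ∈ U, IsCoprime (chi1 x) (chi2 x) := fun x hx =>
    isCoprime_of_no_common_complex_root (hfac.coprime x hx)
  have hK1 : ∀ x ∈ U, KerIsCoord (L x) (chi1 x) (fun i : Fin n => (i : ℕ) < r) := by
    intro x hx w
    rw [← mem_span_single_iff]
    exact (SetLike.ext_iff.1 (hD1 x hx) w)
  have hK2 : ∀ x ∈ U, KerIsCoord (L x) (chi2 x) (fun i : Fin n => ¬ (i : ℕ) < r) := by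
    intro x hx w
    rw [← mem_span_single_iff]
    simp only [not_lt]
    exact (SetLike.ext_iff.1 (hD2 x hx) w)
  have hK1' : ∀ x ∈ U, KerIsCoord (L x) (chi1 x) (fun i : Fin n => ¬ ¬ (i : ℕ) < r) := by
    simpa only [not_not] using hK1
  have hfac' : ∀ x ∈ U, (L x).charpoly = chi2 x * chi1 x := fun x hx => by
    rw [hfac.factor x hx, mul_comm]
  have hco' : ∀ x ∈ U, IsCoprime (chi2 x) (chi1 x) := fun x hx => (hco x hx).symm
  have hz1 : ∀ x ∈ U, ∀ i j : Fin n, (i : ℕ) < r → ¬ (j : ℕ) < r → L x i j = 0 :=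
    fun x hx i j hi hj => (hK2 x hx).apply_eq_zero (not_not.2 hi) hj
  have hz2 : ∀ x ∈ U, ∀ i j : Fin n, ¬ (i : ℕ) < r → (j : ℕ) < r → L x i j = 0 :=
    fun x hx i j hi hj => (hK1 x hx).apply_eq_zero hi hj
  have hoff : ∀ x ∈ U, ∀ i j : Fin n, i ≠ j → L x i j = 0 →
      (∀ m, L x i m * L x m j = 0) → lieDerivEnd v L x i j = 0 := by
    intro x hx i j hne h0 hm
    rw [hlie x hx]
    simp [mul_apply, hm, h0, hne]
  have hlie1 : ∀ x ∈ U, ∀ i j : Fin n, (i : ℕ) < r → ¬ (j : ℕ) < r →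
      lieDerivEnd v L x i j = 0 := by
    intro x hx i j hi hj
    refine hoff x hx i j (by rintro rfl; exact hj hi) (hz1 x hx i j hi hj) fun m => ?_
    by_cases hm : (m : ℕ) < r
    · rw [hz1 x hx m j hm hj, mul_zero]
    · rw [hz1 x hx i m hi hm, zero_mul]
  have hlie2 : ∀ x ∈ U, ∀ i j : Fin n, ¬ (i : ℕ) < r → ¬ ¬ (j : ℕ) < r →
      lieDerivEnd v L x i j = 0 := by
    intro x hx i j hi hj
    rw [not_not] at hj
    refine hoff x hx i j (by rintro rfl; exact hi hj) (hz2 x hx i j hi hj) fun m => ?_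
    by_cases hm : (m : ℕ) < r
    · rw [hz2 x hx i m hi hm, zero_mul]
    · rw [hz2 x hx m j hm hj, mul_zero]
  have hv1 : ∀ x ∈ U, ∀ i j : Fin n, (i : ℕ) < r → ¬ (j : ℕ) < r →
      pd j (fun y => v y i) x = 0 := fun x hx i j hi hj =>
    pd_component_eq_zero hU hfac.factor hco hK1 hK2 hlie1 hx hi hj
  have hv2 : ∀ x ∈ U, ∀ i j : Fin n, ¬ (i : ℕ) < r → (j : ℕ) < r →
      pd j (fun y => v y i) x = 0 := fun x hx i j hi hj =>
    pd_component_eq_zero (p := fun i : Fin n => ¬ (i : ℕ) < r) hU hfac' hco' hK2 hK1' hlie2 hx hi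
      (not_not.2 hj)
  refine ⟨fun x hx i hi m hm => hv1 x hx i m hi (not_lt.2 hm),
    fun x hx i hi m hm => hv2 x hx i m (not_lt.2 hi) hm, ?_⟩
  have hrange : 0 < r ∧ r < n := by
    obtain ⟨x, hx⟩ := hconn.nonempty
    have h1 := hfac.deg1 x hx
    have h2 := hfac.deg2 x hx
    have h3 := congrArg natDegree (hfac.factor x hx)
    rw [(hfac.monic1 x hx).natDegree_mul (hfac.monic2 x hx), charpoly_natDegree_eq_dim,
      Fintype.card_fin] at h3
    have h4 := hdeg x hx
    omega
  have hβ1 : ∀ k : Fin n, ¬ (k : ℕ) < r → ∀ x ∈ U, DifferentiableAt ℝ β x ∧ pd k β x = 0 :=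
    fun k hk x hx => coefficient_pd_eq_zero hU hLsmooth hv.1 hLdet hz1 hz2
      (fun y hy a c j ha _ hj =>
        pd_block_eq_zero hU hg hLsa hLcomp hfac.factor hco hK1 hK2 hy ha hj)
      hv1 hlie ⟨⟨0, by omega⟩, hrange.1⟩ hk hx
  have hβ2 : ∀ k : Fin n, (k : ℕ) < r → ∀ x ∈ U, DifferentiableAt ℝ β x ∧ pd k β x = 0 :=
    fun k hk x hx => coefficient_pd_eq_zero (p := fun i : Fin n => ¬ (i : ℕ) < r) hU hLsmooth
      hv.1 hLdet (fun y hy i j hi hj => hz2 y hy i j hi (not_not.1 hj))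
      (fun y hy i j hi hj => hz1 y hy i j (not_not.1 hi) hj)
      (fun y hy a c j ha _ hj =>
        pd_block_eq_zero (p := fun i : Fin n => ¬ (i : ℕ) < r) hU hg hLsa hLcomp hfac' hco'
          hK2 hK1' hy ha hj)
      (fun y hy i j hi hj => hv2 y hy i j hi (not_not.1 hj)) hlie
      ⟨⟨r, hrange.2⟩, lt_irrefl r⟩ (not_not.2 hk) hx
  have hβd : ∀ k : Fin n, ∀ x ∈ U, DifferentiableAt ℝ β x ∧ pd k β x = 0 := fun k => by
    by_cases hk : (k : ℕ) < r
    · exact hβ2 k hk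
    · exact hβ1 k hk
  have hderiv : U.EqOn (fderiv ℝ β) 0 := by
    intro x hx
    ext w
    rw [pi_eq_sum_univ' w, map_sum]
    refine Finset.sum_eq_zero fun k _ => ?_
    have h := (hβd k x hx).2
    unfold pd at h
    rw [map_smul, h, smul_zero]
  intro x hx x' hx'
  exact hU.is_const_of_fderiv_eq_zero hconn.isPreconnected
    (fun y hy => (hβd ⟨0, by omega⟩ y hy).1.differentiableWithinAt) hderiv hx hx'
end
end

section
/- Let L be a (1,1)-tensor field on a smooth manifold M with vanishing Nijenhuis torsion, N_L = 0. Then for every polynomial p with constant real coefficients, the Nijenhuis torsion of p(L) vanishes: N_{p(L)} = 0. Consequently, N_{f(L)} = 0 for every function f such that K, f, L satisfy the admissibility assumptions. -/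
open Matrix Polynomial Filter

noncomputable section

variable {ι : Type} [Fintype ι] [DecidableEq ι]

/-- The assumptions (i)–(iv) of Section 1.3 on the compact set `K` and the function
`f : K → ℂ` (the condition on the spectrum of `L` is stated separately). -/
structure AdmissibleFun (K : Set ℂ) (f : ℂ → ℂ) : Prop where
  compact : IsCompact K
  conn : IsConnected Kᶜ
  cont : ContinuousOn f K
  holo : DifferentiableOn ℂ f (interior K)
  symmK : ∀ z ∈ K, (starRingEnd ℂ) z ∈ K
  symmf : ∀ z ∈ K, f ((starRingEnd ℂ) z) = (starRingEnd ℂ) (f z)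

/-- Assumption (v): the (complex) spectrum of `L(x)` lies in the interior of `K` for
every `x ∈ U`. -/
def SpectrumIn {ι : Type} [Fintype ι] [DecidableEq ι]
    (L : (ι → ℝ) → Matrix ι ι ℝ) (U : Set (ι → ℝ)) (K : Set ℂ) : Prop :=
  ∀ x ∈ U, spectrum ℂ ((L x).map (algebraMap ℝ ℂ)) ⊆ interior K

/-- `FL` represents the (1,1)-tensor `f(L)`: it is the limit of `pᵢ(L)` for a sequence
of real polynomials `pᵢ` converging to `f` uniformly on `K` (such a sequence exists by
Mergelyan's theorem, and the limit does not depend on its choice). -/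
def RepFunOfL {ι : Type} [Fintype ι] [DecidableEq ι]
    (L : (ι → ℝ) → Matrix ι ι ℝ) (U : Set (ι → ℝ)) (K : Set ℂ) (f : ℂ → ℂ)
    (FL : (ι → ℝ) → Matrix ι ι ℝ) : Prop :=
  ∃ p : ℕ → Polynomial ℝ,
    TendstoUniformlyOn (fun m z => aeval z (p m)) f atTop K ∧
    ∀ x ∈ U, ∀ i j, Tendsto (fun m => aeval (L x) (p m) i j) atTop (nhds (FL x i j))

/-- The Lie bracket of two vector fields on `ι → ℝ`. -/
def vbracket (u v : (ι → ℝ) → ι → ℝ) (x : ι → ℝ) : ι → ℝ :=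
  fderiv ℝ v x (u x) - fderiv ℝ u x (v x)

/-- The vector field `Lu : x ↦ L(x)(u(x))`. -/
def appT (L : (ι → ℝ) → Matrix ι ι ℝ) (u : (ι → ℝ) → ι → ℝ) : (ι → ℝ) → ι → ℝ :=
  fun x => (L x).mulVec (u x)

/-- The Nijenhuis torsion `N_L(u,v) = L²[u,v] − L[Lu,v] − L[u,Lv] + [Lu,Lv]`. -/
def nijenhuis (L : (ι → ℝ) → Matrix ι ι ℝ) (u v : (ι → ℝ) → ι → ℝ)
    (x : ι → ℝ) : ι → ℝ :=
  (L x).mulVec ((L x).mulVec (vbracket u v x))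
  - (L x).mulVec (vbracket (appT L u) v x)
  - (L x).mulVec (vbracket u (appT L v) x)
  + vbracket (appT L u) (appT L v) x

/-- `N_L = 0` on `U`, tested against all smooth vector fields. -/
def NijenhuisZero (L : (ι → ℝ) → Matrix ι ι ℝ) (U : Set (ι → ℝ)) : Prop :=
  ∀ u v : (ι → ℝ) → ι → ℝ, ContDiff ℝ (⊤ : ℕ∞) u → ContDiff ℝ (⊤ : ℕ∞) v →
    ∀ x ∈ U, nijenhuis L u v x = 0

section RemainderBound

/-- Dividing out a point `μ` deep inside `K` costs at most a factor `2 / δ` in sup norm on `K`. -/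
theorem exists_eq_C_add_mul_of_closedBall_subset {K : Set ℂ} {δ : ℝ} (hδ : 0 < δ) {μ : ℂ}
    (hμ : Metric.closedBall μ δ ⊆ K) (p : ℂ[X]) {M : ℝ} (hp : ∀ z ∈ K, ‖p.eval z‖ ≤ M) :
    ∃ q : ℂ[X], p = C (p.eval μ) + (X - C μ) * q ∧ ∀ z ∈ K, ‖q.eval z‖ ≤ 2 / δ * M := by
  obtain ⟨q, hq⟩ : X - C μ ∣ p - C (p.eval μ) := by
    rw [dvd_iff_isRoot]
    simp
  have hμK : μ ∈ K := hμ (Metric.mem_closedBall_self hδ.le)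
  have heval (z : ℂ) : p.eval z - p.eval μ = (z - μ) * q.eval z := by
    simpa using congrArg (Polynomial.eval z) hq
  have hfar (z : ℂ) (hzK : z ∈ K) (hz : δ ≤ ‖z - μ‖) : ‖q.eval z‖ ≤ 2 / δ * M := by
    have h : ‖z - μ‖ * ‖q.eval z‖ ≤ M + M := by
      rw [← norm_mul, ← heval]
      exact (norm_sub_le _ _).trans (add_le_add (hp z hzK) (hp μ hμK))
    have h' : δ * ‖q.eval z‖ ≤ M + M :=
      (mul_le_mul_of_nonneg_right hz (norm_nonneg _)).trans h
    rw [div_mul_eq_mul_div, le_div_iff₀ hδ]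
    linarith
  refine ⟨q, by rw [← hq]; ring, fun z hzK => ?_⟩
  rcases le_or_gt δ ‖z - μ‖ with hz | hz
  · exact hfar z hzK hz
  · refine Complex.norm_le_of_forall_mem_frontier_norm_le (U := Metric.ball μ δ)
      Metric.isBounded_ball q.differentiable.diffContOnCl (fun w hw => ?_)
      (subset_closure (mem_ball_iff_norm.2 hz))
    rw [frontier_ball μ hδ.ne'] at hw
    exact hfar w (hμ (Metric.sphere_subset_closedBall hw)) (mem_sphere_iff_norm.1 hw).ge

/-- Coefficients of remainders modulo a product of linear factors with roots deep inside `K` are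
controlled by the sup norm on `K`. -/
theorem exists_norm_coeff_modByMonic_prod_le {K : Set ℂ} {R δ : ℝ} (hK : ∀ z ∈ K, ‖z‖ ≤ R)
    (hδ : 0 < δ) (k : ℕ) :
    ∃ B : ℝ, ∀ s : Multiset ℂ, s.card = k → (∀ μ ∈ s, Metric.closedBall μ δ ⊆ K) →
      ∀ (p : ℂ[X]) (M : ℝ), 0 ≤ M → (∀ z ∈ K, ‖p.eval z‖ ≤ M) →
        ∀ i, ‖(p %ₘ (s.map fun μ => X - C μ).prod).coeff i‖ ≤ B * M := by
  induction k with
  | zero =>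
    refine ⟨0, fun s hs _ p M _ _ i => ?_⟩
    obtain rfl := Multiset.card_eq_zero.1 hs
    simp
  | succ k ih =>
    obtain ⟨B, hB⟩ := ih
    refine ⟨1 + (1 + R) * (|B| * (2 / δ)), fun s hs hsK p M hM hp i => ?_⟩
    obtain ⟨μ, hμs⟩ := Multiset.card_pos_iff_exists_mem.1 (show 0 < s.card by omega)
    obtain ⟨t, rfl⟩ := Multiset.exists_cons_of_mem hμs
    have ht : t.card = k := by simpa using hs
    have hμ := hsK μ (Multiset.mem_cons_self μ t)
    have hμK : μ ∈ K := hμ (Metric.mem_closedBall_self hδ.le)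
    obtain ⟨q, hpq, hq⟩ := exists_eq_C_add_mul_of_closedBall_subset hδ hμ p hp
    set P : ℂ[X] := (t.map fun ν => X - C ν).prod with hP
    have hPm : P.Monic := monic_multiset_prod_of_monic _ _ fun ν _ => monic_X_sub_C ν
    have hmod : p %ₘ ((X - C μ) * P) = C (p.eval μ) + (X - C μ) * (q %ₘ P) := by
      refine (div_modByMonic_unique (q /ₘ P) _ ((monic_X_sub_C μ).mul hPm) ⟨?_, ?_⟩).2
      · conv_rhs => rw [hpq, ← modByMonic_add_div q P]
        ring
      · rw [degree_mul]
        have hP0 : (0 : WithBot ℕ) ≤ P.degree := zero_le_degree_iff.2 hPm.ne_zero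
        have hd : (X - C μ : ℂ[X]).degree = 1 := degree_X_sub_C μ
        have hpos : (0 : WithBot ℕ) < (X - C μ : ℂ[X]).degree + P.degree := by
          rw [hd, degree_eq_natDegree hPm.ne_zero]
          norm_cast
          omega
        refine (degree_add_le _ _).trans_lt (max_lt (degree_C_le.trans_lt hpos) ?_)
        rw [degree_mul]
        exact WithBot.add_lt_add_left (by simp [hd]) (degree_modByMonic_lt q hPm)
    have hM' : 0 ≤ 2 / δ * M := by positivity
    have hr (j : ℕ) : ‖(q %ₘ P).coeff j‖ ≤ |B| * (2 / δ) * M := by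
      rw [mul_assoc]
      exact (hB t ht (fun ν hν => hsK ν (Multiset.mem_cons_of_mem hν)) q _ hM' hq j).trans
        (mul_le_mul_of_nonneg_right (le_abs_self B) hM')
    have hR : ‖μ‖ ≤ R := hK μ hμK
    have hpμ : ‖p.eval μ‖ ≤ M := hp μ hμK
    rw [Multiset.map_cons, Multiset.prod_cons, hmod, sub_mul, coeff_add, coeff_sub, coeff_C_mul]
    have h₁ : ‖(C (p.eval μ)).coeff i‖ ≤ M := by
      rw [coeff_C]
      split_ifs
      · exact hpμ
      · simpa using hM
    have h₂ : ‖(X * (q %ₘ P)).coeff i‖ ≤ |B| * (2 / δ) * M := by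
      cases i with
      | zero => simpa using (norm_nonneg _).trans (hr 0)
      | succ j => simpa using hr j
    have h₃ : ‖μ * (q %ₘ P).coeff i‖ ≤ R * (|B| * (2 / δ) * M) := by
      rw [norm_mul]
      exact mul_le_mul hR (hr i) (norm_nonneg _) ((norm_nonneg _).trans hR)
    calc _ ≤ M + (|B| * (2 / δ) * M + R * (|B| * (2 / δ) * M)) :=
          (norm_add_le _ _).trans (add_le_add h₁ ((norm_sub_le _ _).trans (add_le_add h₂ h₃)))
      _ = _ := by ring

/-- Real form of the coefficient bound for remainders. -/
theorem exists_abs_coeff_modByMonic_le {K : Set ℂ} {R δ : ℝ} (hK : ∀ z ∈ K, ‖z‖ ≤ R)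
    (hδ : 0 < δ) (k : ℕ) :
    ∃ B : ℝ, ∀ P : ℝ[X], P.Monic → P.natDegree = k →
      (∀ μ : ℂ, aeval μ P = 0 → Metric.closedBall μ δ ⊆ K) →
      ∀ (p : ℝ[X]) (M : ℝ), 0 ≤ M → (∀ z ∈ K, ‖aeval z p‖ ≤ M) →
        ∀ i, |(p %ₘ P).coeff i| ≤ B * M := by
  obtain ⟨B, hB⟩ := exists_norm_coeff_modByMonic_prod_le hK hδ k
  refine ⟨B, fun P hP hPk hroots p M hM hp i => ?_⟩
  have hs : (P.map (algebraMap ℝ ℂ)).Splits := IsAlgClosed.splits _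
  have h := hB (P.map (algebraMap ℝ ℂ)).roots
    (by rw [← hs.natDegree_eq_card_roots, natDegree_map, hPk])
    (fun μ hμ => hroots μ (by
      rw [← eval_map_algebraMap]
      exact (mem_roots'.1 hμ).2)) (p.map (algebraMap ℝ ℂ)) M hM
    (fun z hz => by rw [eval_map_algebraMap]; exact hp z hz) i
  rw [← hs.eq_prod_roots_of_monic (hP.map _), ← map_modByMonic _ hP, coeff_map] at h
  simpa using h

end RemainderBound

section Torsion

/-- Square matrices as continuous linear endomorphisms of `ι → ℝ`. -/
def matrixToCLM : Matrix ι ι ℝ ≃ₐ[ℝ] ((ι → ℝ) →L[ℝ] (ι → ℝ)) :=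
  Matrix.toLinAlgEquiv'.trans (Module.End.toContinuousLinearMap (ι → ℝ))

theorem matrixToCLM_apply (A : Matrix ι ι ℝ) (v : ι → ℝ) : matrixToCLM A v = A *ᵥ v := rfl

theorem continuous_matrixToCLM : Continuous (matrixToCLM : Matrix ι ι ℝ → _) :=
  (matrixToCLM : Matrix ι ι ℝ ≃ₐ[ℝ] _).toLinearMap.continuous_of_finiteDimensional

theorem matrixToCLM_aeval (A : Matrix ι ι ℝ) (p : ℝ[X]) :
    matrixToCLM (aeval A p) = aeval (matrixToCLM A) p :=
  (aeval_algHom_apply matrixToCLM A p).symm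

theorem fderiv_appT_apply {L : (ι → ℝ) → Matrix ι ι ℝ} {u : (ι → ℝ) → ι → ℝ} {x : ι → ℝ}
    (hL : DifferentiableAt ℝ (fun y => matrixToCLM (L y)) x) (hu : DifferentiableAt ℝ u x)
    (h : ι → ℝ) :
    fderiv ℝ (appT L u) x h =
      fderiv ℝ (fun y => matrixToCLM (L y)) x h (u x) + matrixToCLM (L x) (fderiv ℝ u x h) := by
  change fderiv ℝ (fun y => matrixToCLM (L y) (u y)) x h = _
  rw [fderiv_clm_apply hL hu]
  simp [add_comm]

/-- The torsion expression of an endomorphism `A` with derivative `D` at a point. -/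
def torsionExpr {V : Type*} [NormedAddCommGroup V] [NormedSpace ℝ V] (A : V →L[ℝ] V)
    (D : V →L[ℝ] V →L[ℝ] V) (u v : V) : V :=
  D (A u) v - A (D u v) - D (A v) u + A (D v u)

/-- Coordinate formula for the Nijenhuis torsion. -/
theorem nijenhuis_eq {L : (ι → ℝ) → Matrix ι ι ℝ} {u v : (ι → ℝ) → ι → ℝ} {x : ι → ℝ}
    (hL : DifferentiableAt ℝ (fun y => matrixToCLM (L y)) x) (hu : DifferentiableAt ℝ u x)
    (hv : DifferentiableAt ℝ v x) :
    nijenhuis L u v x =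
      torsionExpr (matrixToCLM (L x)) (fderiv ℝ (fun y => matrixToCLM (L y)) x) (u x) (v x) := by
  simp only [nijenhuis, vbracket, fderiv_appT_apply hL hu, fderiv_appT_apply hL hv]
  simp only [appT, ← matrixToCLM_apply, map_sub, map_add, torsionExpr]
  abel

/-- If `D` is a derivation of polynomials along `aeval A` with values in one-forms, then the mixed
torsion of two polynomials in `A` vanishes as soon as the torsion of `A` does. -/
theorem mixed_torsion_eq_zero {V : Type*} [NormedAddCommGroup V] [NormedSpace ℝ V]
    (A : V →L[ℝ] V) (D : ℝ[X] → V →L[ℝ] V →L[ℝ] V)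
    (hC : ∀ c, D (C c) = 0) (hadd : ∀ p q, D (p + q) = D p + D q)
    (hmul : ∀ p q h, D (p * q) h = D p h * aeval A q + aeval A p * D q h)
    (hX : ∀ u v, torsionExpr A (D X) u v = 0) (p q : ℝ[X]) (u v : V) :
    D p (aeval A q u) v - aeval A q (D p u v) - D q (aeval A p v) u + aeval A p (D q v u) = 0 := by
  have step (q : ℝ[X])
      (hq : ∀ u v, D X (aeval A q u) v - aeval A q (D X u v) - D q (A v) u + A (D q v u) = 0)
      (p : ℝ[X]) : ∀ u v, D p (aeval A q u) v - aeval A q (D p u v) - D q (aeval A p v) u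
        + aeval A p (D q v u) = 0 := by
    have hmulclosed (p₁ p₂ : ℝ[X])
        (h₁ : ∀ u v, D p₁ (aeval A q u) v - aeval A q (D p₁ u v) - D q (aeval A p₁ v) u
          + aeval A p₁ (D q v u) = 0)
        (h₂ : ∀ u v, D p₂ (aeval A q u) v - aeval A q (D p₂ u v) - D q (aeval A p₂ v) u
          + aeval A p₂ (D q v u) = 0) (u v : V) :
        D (p₁ * p₂) (aeval A q u) v - aeval A q (D (p₁ * p₂) u v) - D q (aeval A (p₁ * p₂) v) u
          + aeval A (p₁ * p₂) (D q v u) = 0 := by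
      have e₁ := h₁ u (aeval A p₂ v)
      have e₂ := congrArg (aeval A p₁) (h₂ u v)
      have hcomm (w : V) : aeval A q (aeval A p₁ w) = aeval A p₁ (aeval A q w) := by
        rw [← mul_apply_eq_comp, ← mul_apply_eq_comp, ← map_mul, ← map_mul, mul_comm]
      simp only [map_add, map_sub, map_zero] at e₂
      simp only [hmul, map_mul, _root_.add_apply, mul_apply_eq_comp, map_add, hcomm]
      refine Eq.trans ?_ ((congrArg₂ (· + ·) e₁ e₂).trans (add_zero 0))
      abel
    induction p using Polynomial.induction_on with
    | C c => simp [hC, Algebra.algebraMap_eq_smul_one]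
    | add p₁ p₂ h₁ h₂ =>
      intro u v
      simp only [hadd, map_add, _root_.add_apply]
      refine Eq.trans ?_ ((congrArg₂ (· + ·) (h₁ u v) (h₂ u v)).trans (add_zero 0))
      abel
    | monomial k c h =>
      rw [pow_succ, ← mul_assoc]
      exact hmulclosed _ _ h (by simpa using hq)
  refine step q (fun u v => ?_) p u v
  have := step X (by simpa [torsionExpr] using hX) q v u
  rw [aeval_X] at this
  rw [← neg_eq_zero, ← this]
  abel

section Aeval

variable {E 𝔸 : Type*} [NormedAddCommGroup E] [NormedSpace ℝ E] [NormedRing 𝔸]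
  [NormedAlgebra ℝ 𝔸] {L : E → 𝔸} {x : E}

theorem differentiableAt_aeval (hL : DifferentiableAt ℝ L x) (p : ℝ[X]) :
    DifferentiableAt ℝ (fun y => aeval (L y) p) x := by
  simp only [aeval_eq_sum_range]
  fun_prop

theorem fderiv_aeval_mul (hL : DifferentiableAt ℝ L x) (p q : ℝ[X]) (h : E) :
    fderiv ℝ (fun y => aeval (L y) (p * q)) x h =
      fderiv ℝ (fun y => aeval (L y) p) x h * aeval (L x) q
        + aeval (L x) p * fderiv ℝ (fun y => aeval (L y) q) x h := by
  simp only [map_mul]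
  refine (DFunLike.congr_fun
    (fderiv_fun_mul' (differentiableAt_aeval hL p) (differentiableAt_aeval hL q)) h).trans ?_
  simp [add_comm]

theorem fderiv_aeval_add (hL : DifferentiableAt ℝ L x) (p q : ℝ[X]) :
    fderiv ℝ (fun y => aeval (L y) (p + q)) x =
      fderiv ℝ (fun y => aeval (L y) p) x + fderiv ℝ (fun y => aeval (L y) q) x := by
  simp only [map_add]
  exact fderiv_fun_add (differentiableAt_aeval hL p) (differentiableAt_aeval hL q)

/-- Differentiating `p(L)` at `x` only depends on `p` modulo the square of a polynomial
annihilating `L x`. -/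
theorem fderiv_aeval_modByMonic_sq (hL : DifferentiableAt ℝ L x) {χ : ℝ[X]}
    (hχ : aeval (L x) χ = 0) (p : ℝ[X]) :
    fderiv ℝ (fun y => aeval (L y) p) x = fderiv ℝ (fun y => aeval (L y) (p %ₘ χ ^ 2)) x := by
  have hzero : fderiv ℝ (fun y => aeval (L y) (χ ^ 2 * (p /ₘ χ ^ 2))) x = 0 := by
    ext1 h
    rw [pow_two, mul_assoc, fderiv_aeval_mul hL]
    simp [hχ]
  conv_lhs => rw [← modByMonic_add_div p (χ ^ 2)]
  rw [fderiv_aeval_add hL, hzero, add_zero]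

/-- Locally uniform bound of the derivative of `p(L)` by the sup norm of `p` on `K`, given monic
annihilating polynomials of fixed degree with roots uniformly deep inside `K`. -/
theorem exists_eventually_norm_fderiv_aeval_le {U : Set E} (hU : IsOpen U)
    (hL : ContDiffOn ℝ 1 L U) (hx : x ∈ U) {χ : E → ℝ[X]} {k : ℕ} (hχ : ∀ y, (χ y).Monic)
    (hχk : ∀ y, (χ y).natDegree = k) (hχL : ∀ y, aeval (L y) (χ y) = 0)
    {K : Set ℂ} (hK : IsCompact K) {δ : ℝ} (hδ : 0 < δ)
    (hroots : ∀ᶠ y in nhds x, ∀ μ : ℂ, aeval μ (χ y) = 0 → Metric.closedBall μ δ ⊆ K) :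
    ∃ B : ℝ, ∀ᶠ y in nhds x, ∀ (p : ℝ[X]) (M : ℝ), 0 ≤ M → (∀ z ∈ K, ‖aeval z p‖ ≤ M) →
      ‖fderiv ℝ (fun y => aeval (L y) p) y‖ ≤ B * M := by
  have hdiff (y : E) (hy : y ∈ U) : DifferentiableAt ℝ L y :=
    (hL.contDiffAt (hU.mem_nhds hy)).differentiableAt one_ne_zero
  obtain ⟨R, hR⟩ := hK.isBounded.exists_norm_le
  obtain ⟨B, hB⟩ := exists_abs_coeff_modByMonic_le hR hδ (2 * k)
  have hpow (i : ℕ) : ∀ᶠ y in nhds x,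
      ‖fderiv ℝ (fun y => L y ^ i) y‖ ≤ ‖fderiv ℝ (fun y => L y ^ i) x‖ + 1 := by
    have hc : ContinuousAt (fderiv ℝ (fun y => L y ^ i)) x :=
      ((hL.pow i).continuousOn_fderiv_of_isOpen hU le_rfl).continuousAt (hU.mem_nhds hx)
    exact (hc.norm.eventually (gt_mem_nhds (lt_add_one _))).mono fun y hy => hy.le
  have hpows : ∀ᶠ y in nhds x, ∀ i ∈ Finset.range (2 * k + 1),
      ‖fderiv ℝ (fun y => L y ^ i) y‖ ≤ ‖fderiv ℝ (fun y => L y ^ i) x‖ + 1 :=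
    (Finset.eventually_all _).2 fun i _ => hpow i
  refine ⟨B * ∑ i ∈ Finset.range (2 * k + 1),
    (‖fderiv ℝ (fun y => L y ^ i) x‖ + 1), ?_⟩
  filter_upwards [hroots, hpows, hU.mem_nhds hx] with y hy hpy hyU p M hM hp
  have hLy := hdiff y hyU
  have hmonic : (χ y ^ 2).Monic := (hχ y).pow 2
  have hdeg : (χ y ^ 2).natDegree = 2 * k := by
    rw [(hχ y).natDegree_pow, hχk]
  have hcoeff := hB _ hmonic hdeg (fun μ hμ => hy μ (by simpa using hμ)) p M hM hp
  have hr : (p %ₘ χ y ^ 2).natDegree < 2 * k + 1 :=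
    Nat.lt_succ_of_le (hdeg ▸ natDegree_modByMonic_le p hmonic)
  rw [fderiv_aeval_modByMonic_sq hLy (hχL y)]
  simp only [aeval_eq_sum_range' hr]
  rw [fderiv_fun_sum fun i _ => (hLy.fun_pow i).fun_const_smul _]
  calc _ ≤ ∑ i ∈ Finset.range (2 * k + 1),
        (B * M) * (‖fderiv ℝ (fun y => L y ^ i) x‖ + 1) := by
        refine norm_sum_le_of_le _ fun i hi => ?_
        rw [fderiv_fun_const_smul (hLy.fun_pow i), norm_smul]
        exact mul_le_mul (hcoeff i) (hpy i hi) (norm_nonneg _)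
          ((abs_nonneg _).trans (hcoeff i))
    _ = _ := by rw [← Finset.mul_sum]; ring

/-- If real polynomials `p m` converge uniformly on `K` and `p m (L)` converges pointwise to `F`,
then `F` is differentiable and the derivatives converge. -/
theorem hasFDerivAt_of_tendsto_aeval [CompleteSpace 𝔸] {F : E → 𝔸} {U : Set E} (hU : IsOpen U)
    (hL : ContDiffOn ℝ 1 L U) (hx : x ∈ U) {χ : E → ℝ[X]} {k : ℕ} (hχ : ∀ y, (χ y).Monic)
    (hχk : ∀ y, (χ y).natDegree = k) (hχL : ∀ y, aeval (L y) (χ y) = 0)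
    {K : Set ℂ} (hK : IsCompact K) {δ : ℝ} (hδ : 0 < δ)
    (hroots : ∀ᶠ y in nhds x, ∀ μ : ℂ, aeval μ (χ y) = 0 → Metric.closedBall μ δ ⊆ K)
    {f : ℂ → ℂ} {p : ℕ → ℝ[X]}
    (hp : TendstoUniformlyOn (fun m z => aeval z (p m)) f atTop K)
    (hF : ∀ y ∈ U, Tendsto (fun m => aeval (L y) (p m)) atTop (nhds (F y))) :
    ∃ F' : E →L[ℝ] 𝔸, HasFDerivAt F F' x ∧
      Tendsto (fun m => fderiv ℝ (fun y => aeval (L y) (p m)) x) atTop (nhds F') := by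
  obtain ⟨B, hB⟩ := exists_eventually_norm_fderiv_aeval_le hU hL hx hχ hχk hχL hK hδ hroots
  obtain ⟨s, hs, hso, hxs⟩ := mem_nhds_iff.1 (hB.and (hU.mem_nhds hx))
  have hdiff (y : E) (hy : y ∈ s) : DifferentiableAt ℝ L y :=
    (hL.contDiffAt (hU.mem_nhds (hs hy).2)).differentiableAt one_ne_zero
  have hcauchy : UniformCauchySeqOn
      (fun m y => fderiv ℝ (fun y => aeval (L y) (p m)) y) atTop s := by
    rw [Metric.uniformCauchySeqOn_iff]
    intro ε hε
    have hB' : 0 < |B| + 1 := by positivity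
    obtain ⟨N, hN⟩ := Metric.uniformCauchySeqOn_iff.1 hp.uniformCauchySeqOn (ε / (|B| + 1))
      (by positivity)
    refine ⟨N, fun m hm k hk y hy => ?_⟩
    have hsub : fderiv ℝ (fun y => aeval (L y) (p m)) y - fderiv ℝ (fun y => aeval (L y) (p k)) y
        = fderiv ℝ (fun y => aeval (L y) (p m - p k)) y := by
      rw [sub_eq_iff_eq_add, ← fderiv_aeval_add (hdiff y hy), sub_add_cancel]
    rw [dist_eq_norm, hsub]
    have h := (hs hy).1 (p m - p k) (ε / (|B| + 1)) (by positivity) fun z hz => by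
      rw [map_sub, ← dist_eq_norm]
      exact (hN m hm k hk z hz).le
    refine h.trans_lt ?_
    rw [← mul_div_assoc, div_lt_iff₀ hB']
    nlinarith [le_abs_self B]
  have hlim (y : E) : ∃ G, y ∈ s →
      Tendsto (fun m => fderiv ℝ (fun y => aeval (L y) (p m)) y) atTop (nhds G) := by
    by_cases hy : y ∈ s
    · obtain ⟨G, hG⟩ := cauchySeq_tendsto_of_complete (hcauchy.cauchySeq hy)
      exact ⟨G, fun _ => hG⟩
    · exact ⟨0, fun h => absurd h hy⟩
  choose G hG using hlim
  exact ⟨G x, hasFDerivAt_of_tendstoUniformlyOn hso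
    (hcauchy.tendstoUniformlyOn_of_tendsto hG)
    (fun m y hy => (differentiableAt_aeval (hdiff y hy) (p m)).hasFDerivAt)
    (fun y hy => hF y (hs hy).2) hxs, hG x hxs⟩

end Aeval

/-- Polynomials in a differentiable field of endomorphisms with vanishing torsion at `x` have
vanishing torsion at `x`. -/
theorem torsionExpr_aeval_eq_zero {V : Type*} [NormedAddCommGroup V] [NormedSpace ℝ V]
    {L : V → V →L[ℝ] V} {x : V} (hL : DifferentiableAt ℝ L x)
    (hNL : ∀ u v, torsionExpr (L x) (fderiv ℝ L x) u v = 0) (p : ℝ[X]) (u v : V) :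
    torsionExpr (aeval (L x) p) (fderiv ℝ (fun y => aeval (L y) p) x) u v = 0 :=
  mixed_torsion_eq_zero (L x) (fun p => fderiv ℝ (fun y => aeval (L y) p) x)
    (fun c => by simp) (fderiv_aeval_add hL) (fderiv_aeval_mul hL)
    (by simpa using hNL) p p u v

/-- The torsion expression depends continuously on the endomorphism and its derivative. -/
theorem tendsto_torsionExpr {α V : Type*} [NormedAddCommGroup V] [NormedSpace ℝ V]
    {l : Filter α} {A : α → V →L[ℝ] V} {A₀ : V →L[ℝ] V} {D : α → V →L[ℝ] V →L[ℝ] V}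
    {D₀ : V →L[ℝ] V →L[ℝ] V} (hA : Tendsto A l (nhds A₀)) (hD : Tendsto D l (nhds D₀))
    (u v : V) :
    Tendsto (fun a => torsionExpr (A a) (D a) u v) l (nhds (torsionExpr A₀ D₀ u v)) := by
  have hcont : Continuous fun P : (V →L[ℝ] V) × (V →L[ℝ] V →L[ℝ] V) =>
      torsionExpr P.1 P.2 u v := by
    unfold torsionExpr
    fun_prop
  have h := (hcont.tendsto (A₀, D₀)).comp (hA.prodMk_nhds hD)
  simpa only [Function.comp_def] using h

theorem contDiffOn_matrixToCLM {E : Type*} [NormedAddCommGroup E] [NormedSpace ℝ E]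
    {L : E → Matrix ι ι ℝ} {U : Set E} {k : WithTop ℕ∞}
    (hL : ∀ i j, ContDiffOn ℝ k (fun x => L x i j) U) :
    ContDiffOn ℝ k (fun x => matrixToCLM (L x)) U := by
  have : (fun x => matrixToCLM (L x)) =
      fun x => ∑ i, ∑ j, L x i j • matrixToCLM (Matrix.single i j (1 : ℝ)) := by
    funext x
    conv_lhs => rw [Matrix.matrix_eq_sum_single (L x)]
    simp [← map_smul, Matrix.smul_single]
  rw [this]
  exact ContDiffOn.sum fun i _ => ContDiffOn.sum fun j _ => (hL i j).smul contDiffOn_const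

section Spectrum

open scoped Matrix.Norms.Operator

/-- Near a point where the spectrum lies in the interior of `K`, the eigenvalues stay uniformly
deep inside `K`. -/
theorem exists_eventually_closedBall_subset {E : Type*} [TopologicalSpace E]
    {L : E → Matrix ι ι ℝ} {x : E} (hL : ContinuousAt L x) {K : Set ℂ}
    (hK : spectrum ℂ ((L x).map (algebraMap ℝ ℂ)) ⊆ interior K) :
    ∃ δ > 0, ∀ᶠ y in nhds x, ∀ μ : ℂ, aeval μ (L y).charpoly = 0 →
      Metric.closedBall μ δ ⊆ K := by
  obtain ⟨δ, hδ, hsub⟩ := (spectrum.isCompact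
    ((L x).map (algebraMap ℝ ℂ))).exists_thickening_subset_open isOpen_interior hK
  refine ⟨δ / 3, by positivity, ?_⟩
  have hcont : ContinuousAt (fun y => (L y).map (algebraMap ℝ ℂ)) x :=
    (continuous_id.matrix_map Complex.continuous_ofReal).continuousAt.comp hL
  have hev := hcont.eventually
    (upperHemicontinuousAt_iff_forall_isOpen.1
      ((upperHemicontinuous_spectrum ℂ (Matrix ι ι ℂ)).upperHemicontinuousAt _) _
        Metric.isOpen_thickening (Metric.self_subset_thickening (half_pos hδ) _))
  filter_upwards [hev] with y hy μ hμ z hz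
  have hμ' : μ ∈ spectrum ℂ ((L y).map (algebraMap ℝ ℂ)) := by
    rw [Matrix.mem_spectrum_iff_isRoot_charpoly, Matrix.charpoly_map, IsRoot,
      eval_map_algebraMap, hμ]
  obtain ⟨w, hw, hμw⟩ := Metric.mem_thickening_iff.1 (hy hμ')
  refine interior_subset (hsub (Metric.mem_thickening_iff.2 ⟨w, hw, ?_⟩))
  have := dist_triangle z μ w
  have := Metric.mem_closedBall.1 hz
  linarith

end Spectrum

end Torsion

theorem stmt13 {n : ℕ} (U : Set (Fin n → ℝ)) (hU : IsOpen U)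
    (L : (Fin n → ℝ) → Matrix (Fin n) (Fin n) ℝ)
    (hLsmooth : ∀ i j, ContDiffOn ℝ (⊤ : ℕ∞) (fun x => L x i j) U)
    (hNL : NijenhuisZero L U) :
    -- then `N_{p(L)} = 0` for every real polynomial `p` …
    (∀ q : Polynomial ℝ, NijenhuisZero (fun x => aeval (L x) q) U) ∧
    -- … and `N_{f(L)} = 0` for every admissible function `f`
    (∀ (K : Set ℂ) (f : ℂ → ℂ) (FL : (Fin n → ℝ) → Matrix (Fin n) (Fin n) ℝ),
      AdmissibleFun K f → SpectrumIn L U K → RepFunOfL L U K f FL →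
      NijenhuisZero FL U) := by
  have hL : ContDiffOn ℝ 1 (fun y => matrixToCLM (L y)) U :=
    (contDiffOn_matrixToCLM hLsmooth).of_le (by simp)
  have hdiff (x : Fin n → ℝ) (hx : x ∈ U) : DifferentiableAt ℝ (fun y => matrixToCLM (L y)) x :=
    (hL.contDiffAt (hU.mem_nhds hx)).differentiableAt one_ne_zero
  have htors (x : Fin n → ℝ) (hx : x ∈ U) (u v : Fin n → ℝ) :
      torsionExpr (matrixToCLM (L x)) (fderiv ℝ (fun y => matrixToCLM (L y)) x) u v = 0 := by
    rw [← nijenhuis_eq (u := fun _ => u) (v := fun _ => v) (hdiff x hx)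
      (differentiableAt_const _) (differentiableAt_const _)]
    exact hNL _ _ contDiff_const contDiff_const x hx
  refine ⟨fun q u v hu hv x hx => ?_, fun K f FL hf hspec ⟨p, hp, hlim⟩ u v hu hv x hx => ?_⟩
  · have hq : DifferentiableAt ℝ (fun y => matrixToCLM (aeval (L y) q)) x := by
      simpa only [matrixToCLM_aeval] using differentiableAt_aeval (hdiff x hx) q
    rw [nijenhuis_eq hq (hu.differentiable (by simp) x) (hv.differentiable (by simp) x)]
    simp only [matrixToCLM_aeval]
    exact torsionExpr_aeval_eq_zero (hdiff x hx) (htors x hx) q (u x) (v x)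
  · have hFL (y : Fin n → ℝ) (hy : y ∈ U) :
        Tendsto (fun m => aeval (matrixToCLM (L y)) (p m)) atTop (nhds (matrixToCLM (FL y))) := by
      have h : Tendsto (fun m => aeval (L y) (p m)) atTop (nhds (FL y)) :=
        tendsto_pi_nhds.2 fun i => tendsto_pi_nhds.2 fun j => hlim y hy i j
      simpa only [Function.comp_def, matrixToCLM_aeval] using
        (continuous_matrixToCLM.tendsto (FL y)).comp h
    have hLcont : ContinuousAt L x := continuousAt_pi.2 fun i => continuousAt_pi.2 fun j =>
      (hLsmooth i j).continuousOn.continuousAt (hU.mem_nhds hx)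
    obtain ⟨δ, hδ, hroots⟩ := exists_eventually_closedBall_subset hLcont (hspec x hx)
    obtain ⟨F', hF', hF'lim⟩ := hasFDerivAt_of_tendsto_aeval hU hL hx
      (fun y => (L y).charpoly_monic) (fun y => (L y).charpoly_natDegree_eq_dim)
      (fun y => by rw [← matrixToCLM_aeval, Matrix.aeval_self_charpoly, map_zero])
      hf.compact hδ hroots hp hFL
    rw [nijenhuis_eq hF'.differentiableAt
      (hu.differentiable (by simp) x) (hv.differentiable (by simp) x), hF'.fderiv]
    refine tendsto_nhds_unique (tendsto_torsionExpr (hFL x hx) hF'lim (u x) (v x)) ?_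
    simp only [torsionExpr_aeval_eq_zero (hdiff x hx) (htors x hx)]
    exact tendsto_const_nhds
end
end
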